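/- arXiv:0806.0681 — 2 statements merged into one kernel-verified Lean document; each statement's English description precedes it below -/
import Mathlib

section
/- For n ≥ 2, the number p_n of automorphisms of 𝔽_q[x,y] of degree n satisfies (q−1)³(q+1)²q^(n+1) ≤ p_n ≤ (q−1)³(q+1)²q^(n+1) + (log₂ n)^(log₂ n) · q^(n/2+8). -/
/-!
Give `x` and `y` the degrees of the components of an automorphism `φ` of degree at least `2` as
weights. The leading form of a component of `φ⁻¹` is then a relation between the leading forms of
the components of `φ`, and so is divisible by some `xⁱ - c yʲ` with `i` and `j` coprime and `c ≠ 0`.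
On the other hand, a component of `φ⁻¹` is fixed by the deformation that moves the other one, and
the leading part of this deformation is again nontrivial and fixes the leading form together with
all its factors. No nontrivial deformation fixes `xⁱ - c yʲ` when `i, j ≥ 2`, by Mason–Stothers or,
if the characteristic divides `i` or `j`, by differentiation. Hence `i = 1` or `j = 1`, which is the
degree reduction step of the Jung–van der Kulk theorem.

So every automorphism of degree `n ≥ 2` is `ψ ∘ (x + h(y), y) ∘ M` with `y² ∣ h`, with `M` one of
the `q + 1` representatives of the projective line, and with `deg ψ = m` a proper divisor of `n` and
`deg h = n / m`. For `m = 1` the decomposition is unique and contributes exactly the main term. The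
number of decompositions with `m > 1` is at most `Ω(m)^Ω(m) q^(n/m + m + 6)`, where
`n/m + m ≤ n/2 + 2` and `∑ Ω(m)^Ω(m) ≤ Ω(n)^Ω(n)` over the proper divisors `m` of `n`.
-/

open MvPolynomial

/-- The degree of an automorphism `φ = (f, g)` of `K[x,y]`: `max(deg f, deg g)`. -/
noncomputable def autDeg {K : Type*} [CommSemiring K]
    (φ : MvPolynomial (Fin 2) K ≃ₐ[K] MvPolynomial (Fin 2) K) : ℕ :=
  max (φ (X 0)).totalDegree (φ (X 1)).totalDegree

section WeightFiltration

variable {R σ M : Type*} [CommSemiring R] [AddCommMonoid M] [LinearOrder M]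

/-- The polynomials all of whose monomials have `w`-weight at most `m`. -/
noncomputable def weightLE (R : Type*) {σ M : Type*} [CommSemiring R] [AddCommMonoid M]
    [LinearOrder M] (w : σ → M) (m : M) : Submodule R (MvPolynomial σ R) :=
  restrictSupport R {d | Finsupp.weight w d ≤ m}

/-- The polynomials all of whose monomials have `w`-weight less than `m`. -/
noncomputable def weightLT (R : Type*) {σ M : Type*} [CommSemiring R] [AddCommMonoid M]
    [LinearOrder M] (w : σ → M) (m : M) : Submodule R (MvPolynomial σ R) :=
  restrictSupport R {d | Finsupp.weight w d < m}

variable {w : σ → M} {m n : M} {P Q : MvPolynomial σ R}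

theorem mem_weightLE : P ∈ weightLE R w m ↔ ∀ d, coeff d P ≠ 0 → Finsupp.weight w d ≤ m := by
  simp [weightLE, mem_restrictSupport_iff, Set.subset_def]

theorem mem_weightLT : P ∈ weightLT R w m ↔ ∀ d, coeff d P ≠ 0 → Finsupp.weight w d < m := by
  simp [weightLT, mem_restrictSupport_iff, Set.subset_def]

theorem weightLT_le_weightLE : weightLT R w m ≤ weightLE R w m :=
  restrictSupport_mono R fun _ hd => le_of_lt hd

theorem weightLE_le_weightLT (h : m < n) : weightLE R w m ≤ weightLT R w n :=
  restrictSupport_mono R fun _ hd => lt_of_le_of_lt hd h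

theorem mem_weightLE_of_isWeightedHomogeneous (h : IsWeightedHomogeneous w P m) :
    P ∈ weightLE R w m :=
  mem_weightLE.2 fun _ hd => (h hd).le

theorem exists_mem_weightLE_notMem_weightLT (w : σ → M) (hP : P ≠ 0) :
    ∃ m, P ∈ weightLE R w m ∧ P ∉ weightLT R w m := by
  obtain ⟨d, hd, hmax⟩ :=
    P.support.exists_max_image (Finsupp.weight w) (support_nonempty.2 hP)
  refine ⟨Finsupp.weight w d, mem_weightLE.2 fun e he => hmax e (mem_support_iff.2 he), fun h => ?_⟩
  exact (mem_weightLT.1 h d (mem_support_iff.1 hd)).false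

variable [IsOrderedCancelAddMonoid M]

open scoped Pointwise in
theorem mul_mem_weightLT (hP : P ∈ weightLE R w m) (hQ : Q ∈ weightLT R w n) :
    P * Q ∈ weightLT R w (m + n) := by
  have hPQ := Submodule.mul_mem_mul hP hQ
  rw [weightLE, weightLT, ← restrictSupport_add] at hPQ
  refine restrictSupport_mono R (Set.add_subset_iff.2 fun d hd e he => ?_) hPQ
  simpa using add_lt_add_of_le_of_lt hd he

end WeightFiltration

section LeadingForms

variable {R σ τ M : Type*} [CommRing R] [AddCommMonoid M] [LinearOrder M]

/-- `P'` is the leading form of `P` in weight `m`: its component of `w`-weight `m`, all other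
monomials of `P` having smaller weight. The form `P'` may vanish. -/
def IsLeadingForm (w : σ → M) (m : M) (P P' : MvPolynomial σ R) : Prop :=
  IsWeightedHomogeneous w P' m ∧ P - P' ∈ weightLT R w m

variable {w : σ → M} {m n : M} {P P' Q Q' : MvPolynomial σ R}

theorem isLeadingForm_self (h : IsWeightedHomogeneous w P m) : IsLeadingForm w m P P :=
  ⟨h, by simp⟩

theorem isLeadingForm_zero_iff : IsLeadingForm w m P 0 ↔ P ∈ weightLT R w m := by
  simp [IsLeadingForm, isWeightedHomogeneous_zero]

theorem isLeadingForm_weightedHomogeneousComponent (h : P ∈ weightLE R w m) :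
    IsLeadingForm w m P (weightedHomogeneousComponent w m P) := by
  classical
  refine ⟨weightedHomogeneousComponent_isWeightedHomogeneous m P, mem_weightLT.2 fun d hd => ?_⟩
  rw [coeff_sub, coeff_weightedHomogeneousComponent] at hd
  split_ifs at hd with hdm
  · simp at hd
  · exact (mem_weightLE.1 h d (by simpa using hd)).lt_of_ne hdm

theorem exists_isLeadingForm_ne_zero (w : σ → M) (hP : P ≠ 0) :
    ∃ m P', P' ≠ 0 ∧ IsLeadingForm w m P P' := by
  obtain ⟨m, hle, hlt⟩ := exists_mem_weightLE_notMem_weightLT w hP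
  have hlead := isLeadingForm_weightedHomogeneousComponent hle
  refine ⟨m, _, fun h0 => hlt ?_, hlead⟩
  rwa [h0, isLeadingForm_zero_iff] at hlead

namespace IsLeadingForm

theorem mem_weightLE (h : IsLeadingForm w m P P') : P ∈ weightLE R w m := by
  simpa using add_mem (mem_weightLE_of_isWeightedHomogeneous h.1) (weightLT_le_weightLE h.2)

theorem unique (h : IsLeadingForm w m P Q) (h' : IsLeadingForm w m P Q') : Q = Q' := by
  have hlt : Q - Q' ∈ weightLT R w m := by simpa using sub_mem h'.2 h.2
  have hhom : IsWeightedHomogeneous w (Q - Q') m := h.1.sub h'.1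
  refine sub_eq_zero.1 (MvPolynomial.ext _ _ fun d => ?_)
  by_contra hd
  exact (mem_weightLT.1 hlt d hd).ne (hhom hd)

theorem add (h : IsLeadingForm w m P P') (h' : IsLeadingForm w m Q Q') :
    IsLeadingForm w m (P + Q) (P' + Q') :=
  ⟨h.1.add h'.1, by simpa [add_sub_add_comm] using add_mem h.2 h'.2⟩

theorem sum {ι : Type*} {s : Finset ι} {f g : ι → MvPolynomial σ R}
    (h : ∀ i ∈ s, IsLeadingForm w m (f i) (g i)) :
    IsLeadingForm w m (∑ i ∈ s, f i) (∑ i ∈ s, g i) :=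
  ⟨.sum s g m fun i hi => (h i hi).1, by
    simpa only [Finset.sum_sub_distrib] using sum_mem fun i hi => (h i hi).2⟩

variable [IsOrderedCancelAddMonoid M]

theorem mul (h : IsLeadingForm w m P P') (h' : IsLeadingForm w n Q Q') :
    IsLeadingForm w (m + n) (P * Q) (P' * Q') := by
  have hsub : P * Q - P' * Q' = Q * (P - P') + P' * (Q - Q') := by ring
  refine ⟨h.1.mul h'.1, hsub ▸ add_mem ?_
    (mul_mem_weightLT (mem_weightLE_of_isWeightedHomogeneous h.1) h'.2)⟩
  rw [add_comm]
  exact mul_mem_weightLT h'.mem_weightLE h.2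

theorem C_mul (c : R) (h : IsLeadingForm w m P P') : IsLeadingForm w m (C c * P) (C c * P') := by
  simpa using (isLeadingForm_self (isWeightedHomogeneous_C w c)).mul h

theorem pow (h : IsLeadingForm w m P P') (k : ℕ) : IsLeadingForm w (k • m) (P ^ k) (P' ^ k) := by
  induction k with
  | zero => simpa using isLeadingForm_self (isWeightedHomogeneous_one R w)
  | succ k ih => simpa only [pow_succ, succ_nsmul] using ih.mul h

theorem prod {ι : Type*} {s : Finset ι} {f g : ι → MvPolynomial σ R} {r : ι → M}
    (h : ∀ i ∈ s, IsLeadingForm w (r i) (f i) (g i)) :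
    IsLeadingForm w (∑ i ∈ s, r i) (∏ i ∈ s, f i) (∏ i ∈ s, g i) := by
  classical
  induction s using Finset.induction_on with
  | empty => simpa using isLeadingForm_self (isWeightedHomogeneous_one R w)
  | insert a s ha ih =>
    simp only [Finset.prod_insert ha, Finset.sum_insert ha]
    exact (h a (s.mem_insert_self a)).mul (ih fun i hi => h i (Finset.mem_insert_of_mem hi))

section Substitution

variable {v : τ → M} {A A' : τ → MvPolynomial σ R}

theorem aeval_monomial (h : ∀ t, IsLeadingForm w (v t) (A t) (A' t)) (d : τ →₀ ℕ) (c : R) :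
    IsLeadingForm w (Finsupp.weight v d) (aeval A (monomial d c)) (aeval A' (monomial d c)) := by
  simp only [MvPolynomial.aeval_monomial, algebraMap_eq, Finsupp.weight_apply]
  exact (prod fun t _ => (h t).pow (d t)).C_mul c

theorem aeval_mem_weightLT (h : ∀ t, IsLeadingForm w (v t) (A t) (A' t)) {F : MvPolynomial τ R}
    (hF : F ∈ weightLT R v m) : aeval A F ∈ weightLT R w m := by
  rw [F.as_sum, map_sum]
  exact sum_mem fun d hd => weightLE_le_weightLT (mem_weightLT.1 hF d (mem_support_iff.1 hd))
    (aeval_monomial h d _).mem_weightLE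

theorem aeval (h : ∀ t, IsLeadingForm w (v t) (A t) (A' t)) {F F' : MvPolynomial τ R}
    (hF : IsLeadingForm v m F F') :
    IsLeadingForm w m (MvPolynomial.aeval A F) (MvPolynomial.aeval A' F') := by
  have hhom : IsLeadingForm w m (MvPolynomial.aeval A F') (MvPolynomial.aeval A' F') := by
    rw [F'.as_sum, map_sum, map_sum]
    refine sum fun d hd => ?_
    rw [← hF.1 (mem_support_iff.1 hd)]
    exact aeval_monomial h d _
  simpa using hhom.add (isLeadingForm_zero_iff.2 (aeval_mem_weightLT h hF.2))

theorem rename {v : τ → M} (f : σ → τ) (h : IsLeadingForm (v ∘ f) m P P') :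
    IsLeadingForm v m (MvPolynomial.rename f P) (MvPolynomial.rename f P') := by
  rw [rename_eq_aeval]
  exact aeval (fun i => isLeadingForm_self (isWeightedHomogeneous_X R v (f i))) h

end Substitution

end IsLeadingForm

section TotalDegree

variable {P Q P' Q' : MvPolynomial σ R}

theorem weight_one_eq_degree (d : σ →₀ ℕ) :
    Finsupp.weight (fun _ => (1 : ℚ)) d = (d.degree : ℚ) := by
  simp [Finsupp.weight_apply, Finsupp.sum, Finsupp.degree_apply]

theorem totalDegree_eq_sup_degree (P : MvPolynomial σ R) :
    P.totalDegree = P.support.sup Finsupp.degree := rfl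

theorem mem_weightLE_totalDegree (P : MvPolynomial σ R) :
    P ∈ weightLE R (fun _ => (1 : ℚ)) P.totalDegree := by
  refine mem_weightLE.2 fun d hd => ?_
  rw [weight_one_eq_degree, totalDegree_eq_sup_degree]
  exact_mod_cast Finset.le_sup (mem_support_iff.2 hd)

theorem totalDegree_lt_iff_mem_weightLT {n : ℕ} (hn : 0 < n) :
    P.totalDegree < n ↔ P ∈ weightLT R (fun _ => (1 : ℚ)) n := by
  simp [totalDegree_eq_sup_degree, Finset.sup_lt_iff hn, mem_weightLT, weight_one_eq_degree]

theorem exists_isLeadingForm_totalDegree (hP : P ≠ 0) :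
    ∃ P', P' ≠ 0 ∧ IsLeadingForm (fun _ => (1 : ℚ)) P.totalDegree P P' := by
  have hlead := isLeadingForm_weightedHomogeneousComponent (mem_weightLE_totalDegree P)
  refine ⟨_, fun h0 => ?_, hlead⟩
  obtain ⟨d, hd, hdeg⟩ := P.support.exists_mem_eq_sup (support_nonempty.2 hP) Finsupp.degree
  rw [h0, isLeadingForm_zero_iff] at hlead
  have hlt := mem_weightLT.1 hlead d (mem_support_iff.1 hd)
  rw [weight_one_eq_degree, totalDegree_eq_sup_degree, hdeg] at hlt
  exact hlt.false

theorem IsLeadingForm.totalDegree_sub_C_mul_pow_lt {a b j : ℕ}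
    (hP : IsLeadingForm (fun _ => (1 : ℚ)) a P P') (hQ : IsLeadingForm (fun _ => (1 : ℚ)) b Q Q')
    (hab : a = j * b) (ha : 0 < a) {c : R} (h : P' = C c * Q' ^ j) :
    (P - C c * Q ^ j).totalDegree < a := by
  have hpow := (hQ.pow j).C_mul c
  rw [nsmul_eq_mul, ← Nat.cast_mul, ← hab, ← h] at hpow
  rw [totalDegree_lt_iff_mem_weightLT ha]
  simpa using sub_mem hP.2 hpow.2

end TotalDegree

end LeadingForms

section Cusp

variable {D : Type*} [CommRing D] [IsDomain D] {i j : ℕ} {c e : D} {a b : Polynomial D}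

theorem mul_natDegree_eq_of_pow_sub_C_mul_pow_eq_C (hc : c ≠ 0)
    (h : a ^ i - Polynomial.C c * b ^ j = Polynomial.C e) : i * a.natDegree = j * b.natDegree := by
  have hpow := congrArg Polynomial.natDegree (sub_eq_iff_eq_add'.1 h)
  rwa [Polynomial.natDegree_add_C, Polynomial.natDegree_C_mul hc, Polynomial.natDegree_pow,
    Polynomial.natDegree_pow] at hpow

theorem add_add_one_le_mul_of_coprime (hi : 2 ≤ i) (hj : 2 ≤ j) (hij : i.Coprime j) :
    i + j + 1 ≤ i * j := by
  have hne : i ≠ j := by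
    rintro rfl
    rw [Nat.coprime_self] at hij
    omega
  rcases hne.lt_or_gt with hlt | hlt <;> nlinarith

-- With `r = i * j` and third polynomial `1`, this is an instance of the Fermat–Catalan equation.
theorem natDegree_eq_zero_of_pow_sub_C_mul_pow_eq_C {L : Type*} [Field L] {c e : L}
    {a b : Polynomial L} (hi : 2 ≤ i) (hj : 2 ≤ j) (hij : i.Coprime j) (hiL : (i : L) ≠ 0)
    (hjL : (j : L) ≠ 0) (hc : c ≠ 0) (he : e ≠ 0)
    (h : a ^ i - Polynomial.C c * b ^ j = Polynomial.C e) : b.natDegree = 0 := by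
  have hi0 : i ≠ 0 := by omega
  have hj0 : j ≠ 0 := by omega
  rcases eq_or_ne a 0 with rfl | ha
  · simpa [hj0] using mul_natDegree_eq_of_pow_sub_C_mul_pow_eq_C hc h
  rcases eq_or_ne b 0 with rfl | hb
  · simp
  have hcoprime : IsCoprime a b := by
    have hunit : Polynomial.C e⁻¹ * Polynomial.C e = 1 := by simp [← Polynomial.C_mul, he]
    refine (IsCoprime.pow_iff hi0.bot_lt hj0.bot_lt).1
      ⟨Polynomial.C e⁻¹, -Polynomial.C e⁻¹ * Polynomial.C c, ?_⟩
    linear_combination Polynomial.C e⁻¹ * h + hunit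
  have hfermat : Polynomial.C 1 * a ^ i + Polynomial.C (-c) * b ^ j
      + Polynomial.C (-e) * 1 ^ (i * j) = 0 := by
    simp only [Polynomial.C_neg, Polynomial.C_1]
    linear_combination h
  have hexp : j * (i * j) + i * j * i + i * j ≤ i * j * (i * j) := by
    linarith [Nat.mul_le_mul_right (i * j) (add_add_one_le_mul_of_coprime hi hj hij)]
  exact (Polynomial.flt_catalan hi0 hj0 (mul_ne_zero hi0 hj0) hexp hiL hjL
    (by simpa using ⟨hiL, hjL⟩) ha hb one_ne_zero hcoprime one_ne_zero (neg_ne_zero.2 hc)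
    (neg_ne_zero.2 he) hfermat).2.1

theorem natDegree_eq_zero_of_pow_sub_C_mul_pow_eq_C_of_derivation {R : Type*} [CommRing R]
    [Algebra R D] (δ : Derivation R D D) (hj : 2 ≤ j) (hiD : (i : D) = 0) (hδc : δ c = 0)
    (hδe : δ e ≠ 0) (h : a ^ i - Polynomial.C c * b ^ j = Polynomial.C e) : b.natDegree = 0 := by
  let Δ : Derivation R (Polynomial D) (Polynomial D) :=
    PolynomialModule.equivPolynomialSelf.compDer δ.mapCoeffs
  have hΔC : ∀ x, Δ (Polynomial.C x) = Polynomial.C (δ x) := fun x => by simp [Δ]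
  have hdvd : b ∣ Polynomial.C (δ e) := by
    have hΔ := congrArg Δ h
    simp only [map_sub, Derivation.leibniz, Derivation.leibniz_pow, hΔC, hδc, nsmul_eq_mul,
      smul_eq_mul, ← Polynomial.C_eq_natCast, hiD, Polynomial.C_0, zero_mul] at hΔ
    rw [← hΔ, zero_sub, mul_zero, add_zero, dvd_neg]
    exact dvd_mul_of_dvd_right (dvd_mul_of_dvd_right
      (dvd_mul_of_dvd_left (dvd_pow_self b (by omega)) _) _) _
  simpa using Polynomial.natDegree_le_of_dvd hdvd (by simpa using hδe)

theorem natCast_ne_zero_of_coprime {R : Type*} [CommRing R] [Nontrivial R] (hij : i.Coprime j)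
    (hi : (i : R) = 0) : (j : R) ≠ 0 := fun hj =>
  (hij.cast (R := R)).ne_zero_or_ne_zero.elim (· hi) (· hj)

section MultivariateCoefficients

variable {σ K : Type*} [Field K] {c : K} {u v : σ}

theorem X_pow_sub_C_mul_X_pow_ne_zero (hj : j ≠ 0) (huv : u ≠ v) :
    (X u ^ i - C c * X v ^ j : MvPolynomial σ K) ≠ 0 := by
  classical
  intro h
  have heval := congrArg (eval (Pi.single u (1 : K))) h
  simp [huv.symm, hj] at heval

variable {a b : Polynomial (MvPolynomial σ K)}

theorem natDegree_eq_zero_of_cusp_of_natCast_eq_zero (hj : 2 ≤ j) (hij : i.Coprime j)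
    (hc : c ≠ 0) (huv : u ≠ v) (hiK : (i : K) = 0)
    (h : a ^ i - Polynomial.C (C c) * b ^ j = Polynomial.C (X u ^ i - C c * X v ^ j)) :
    b.natDegree = 0 := by
  refine natDegree_eq_zero_of_pow_sub_C_mul_pow_eq_C_of_derivation (pderiv v) hj ?_ pderiv_C ?_ h
  · simpa using congrArg (C (σ := σ)) hiK
  · have hjK : (j : MvPolynomial σ K) ≠ 0 := by
      simpa using (C_injective σ K).ne (natCast_ne_zero_of_coprime hij hiK)
    simp [Derivation.leibniz, Derivation.leibniz_pow, pderiv_X_of_ne huv, hc, hjK, X_ne_zero]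

theorem natDegree_eq_zero_of_cusp_of_natCast_ne_zero (hi : 2 ≤ i) (hj : 2 ≤ j)
    (hij : i.Coprime j) (hc : c ≠ 0) (huv : u ≠ v) (hiK : (i : K) ≠ 0) (hjK : (j : K) ≠ 0)
    (h : a ^ i - Polynomial.C (C c) * b ^ j = Polynomial.C (X u ^ i - C c * X v ^ j)) :
    b.natDegree = 0 := by
  let L := FractionRing (MvPolynomial σ K)
  have hinj : Function.Injective (algebraMap (MvPolynomial σ K) L) := IsFractionRing.injective _ _
  have hcast : ∀ k : ℕ, (k : K) ≠ 0 → (k : L) ≠ 0 := fun k hk => by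
    simpa using (algebraMap K L).injective.ne hk
  have hmap := congrArg (Polynomial.map (algebraMap (MvPolynomial σ K) L)) h
  rw [Polynomial.map_sub, Polynomial.map_mul, Polynomial.map_pow, Polynomial.map_pow,
    Polynomial.map_C, Polynomial.map_C] at hmap
  rw [← Polynomial.natDegree_map_eq_of_injective hinj]
  exact natDegree_eq_zero_of_pow_sub_C_mul_pow_eq_C hi hj hij (hcast i hiK) (hcast j hjK)
    (by simpa using hc)
    ((map_ne_zero_iff _ hinj).2 (X_pow_sub_C_mul_X_pow_ne_zero (by omega) huv)) hmap

theorem natDegree_eq_zero_of_cusp (hi : 2 ≤ i) (hj : 2 ≤ j) (hij : i.Coprime j) (hc : c ≠ 0)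
    (huv : u ≠ v)
    (h : a ^ i - Polynomial.C (C c) * b ^ j = Polynomial.C (X u ^ i - C c * X v ^ j)) :
    a.natDegree = 0 ∧ b.natDegree = 0 := by
  have hdeg : i * a.natDegree = j * b.natDegree :=
    mul_natDegree_eq_of_pow_sub_C_mul_pow_eq_C (by simpa using hc) h
  suffices a.natDegree = 0 ∨ b.natDegree = 0 by
    have hi0 : i ≠ 0 := by omega
    have hj0 : j ≠ 0 := by omega
    rcases this with h0 | h0 <;> simpa [h0, hi0, hj0, eq_comm] using hdeg
  by_cases hiK : (i : K) = 0
  · exact .inr (natDegree_eq_zero_of_cusp_of_natCast_eq_zero hj hij hc huv hiK h)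
  by_cases hjK : (j : K) = 0
  · have hcc : (Polynomial.C (C c⁻¹) * Polynomial.C (C c) : Polynomial (MvPolynomial σ K)) = 1 := by
      simp [← Polynomial.C_mul, ← C_mul, hc]
    have hswap : b ^ j - Polynomial.C (C c⁻¹) * a ^ i
        = Polynomial.C (X v ^ j - C c⁻¹ * X u ^ i) := by
      simp only [Polynomial.C_sub, Polynomial.C_mul, Polynomial.C_pow] at h ⊢
      linear_combination (-Polynomial.C (C c⁻¹)) * h - (b ^ j - Polynomial.C (X v) ^ j) * hcc
    exact .inl (natDegree_eq_zero_of_cusp_of_natCast_eq_zero hi hij.symm (inv_ne_zero hc)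
      huv.symm hjK hswap)
  · exact .inr (natDegree_eq_zero_of_cusp_of_natCast_ne_zero hi hj hij hc huv hiK hjK h)

end MultivariateCoefficients

end Cusp

section Deformations

variable {σ R : Type*} [CommRing R]

/-- A polynomial map of affine space to itself depending polynomially on a parameter `t`, the
variable of the outer polynomial ring: it is the identity at `t = 0` and genuinely depends on `t`.
A polynomial `P` is fixed by the deformation `A` when `aeval A P = Polynomial.C P`. -/
structure IsNontrivialDeformation (A : σ → Polynomial (MvPolynomial σ R)) : Prop where
  eval_zero : ∀ i, (A i).eval 0 = X i
  exists_natDegree_ne_zero : ∃ i, (A i).natDegree ≠ 0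

variable {A : σ → Polynomial (MvPolynomial σ R)}

theorem eval_zero_aeval (hA : ∀ i, (A i).eval 0 = X i) (P : MvPolynomial σ R) :
    (aeval A P).eval 0 = P := by
  have hcomp : ((Polynomial.aeval (0 : MvPolynomial σ R)).restrictScalars R).comp (aeval A)
      = AlgHom.id R _ := MvPolynomial.algHom_ext (by simpa using hA)
  simpa [Polynomial.coe_aeval_eq_eval] using DFunLike.congr_fun hcomp P

theorem aeval_eq_C_of_natDegree_eq_zero (hA : ∀ i, (A i).eval 0 = X i)
    (hdeg : ∀ i, (A i).natDegree = 0) (P : MvPolynomial σ R) : aeval A P = Polynomial.C P := by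
  have hAC : aeval A = Polynomial.CAlgHom := MvPolynomial.algHom_ext fun i => by
    rw [aeval_X, Polynomial.CAlgHom_apply, ← hA i, ← Polynomial.coeff_zero_eq_eval_zero]
    exact Polynomial.eq_C_of_natDegree_eq_zero (hdeg i)
  exact DFunLike.congr_fun hAC P

theorem IsNontrivialDeformation.fixes_of_dvd [IsDomain R] (hA : IsNontrivialDeformation A)
    {P Q : MvPolynomial σ R} (hP : P ≠ 0) (hPA : aeval A P = Polynomial.C P) (hQP : Q ∣ P) :
    aeval A Q = Polynomial.C Q := by
  have hdeg : (aeval A Q).natDegree = 0 := by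
    simpa [hPA] using
      Polynomial.natDegree_le_of_dvd (map_dvd (aeval A) hQP) (by simpa [hPA] using hP)
  rw [Polynomial.eq_C_of_natDegree_eq_zero hdeg, Polynomial.coeff_zero_eq_eval_zero,
    eval_zero_aeval hA.eval_zero]

/-- Moving one coordinate of the inverse of an automorphism along the parameter fixes all its other
coordinates. -/
theorem exists_isNontrivialDeformation_fixing_symm_X [Nontrivial R]
    (φ : MvPolynomial σ R ≃ₐ[R] MvPolynomial σ R) (l : σ) :
    ∃ A : σ → Polynomial (MvPolynomial σ R), IsNontrivialDeformation A ∧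
      ∀ k ≠ l, aeval A (φ.symm (X k)) = Polynomial.C (φ.symm (X k)) := by
  classical
  let Z : σ → Polynomial (MvPolynomial σ R) := fun k =>
    Polynomial.C (φ.symm (X k)) + if k = l then Polynomial.X else 0
  let A : σ → Polynomial (MvPolynomial σ R) := fun i => aeval Z (φ (X i))
  have hA : ∀ P, aeval A P = aeval Z (φ P) := fun P => by
    have hcomp : aeval A = (aeval Z).comp φ.toAlgHom := MvPolynomial.algHom_ext (by simp [A])
    exact DFunLike.congr_fun hcomp P
  have hAZ : ∀ k, aeval A (φ.symm (X k)) = Z k := fun k => by simp [hA]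
  have hA0 : ∀ i, (A i).eval 0 = X i := fun i => by
    have hcomp : ((Polynomial.aeval (0 : MvPolynomial σ R)).restrictScalars R).comp (aeval Z)
        = φ.symm.toAlgHom := by
      refine MvPolynomial.algHom_ext fun k => ?_
      by_cases hk : k = l <;> simp [Z, hk]
    simpa [A, Polynomial.coe_aeval_eq_eval] using DFunLike.congr_fun hcomp (φ (X i))
  refine ⟨A, ⟨hA0, ?_⟩, fun k hk => by simp [hAZ, Z, hk]⟩
  by_contra! hdeg
  have hfix := aeval_eq_C_of_natDegree_eq_zero hA0 hdeg (φ.symm (X l))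
  simp [hAZ, Z] at hfix

end Deformations

section DegenerationToLeadingForms

variable {σ R : Type*} [CommRing R] {w : σ → ℚ} {B : σ → Polynomial (MvPolynomial σ R)}

theorem exists_parameter_weight [Finite σ] (w : σ → ℚ) (hB : IsNontrivialDeformation B) :
    ∃ t : ℚ,
      (∀ i n d, coeff d ((B i).coeff n) ≠ 0 → n • t + Finsupp.weight w d ≤ w i) ∧
      ∃ i n d, n ≠ 0 ∧ coeff d ((B i).coeff n) ≠ 0 ∧ n • t + Finsupp.weight w d = w i := by
  have := Fintype.ofFinite σ
  let T : Finset (Σ _ : σ, Σ _ : ℕ, σ →₀ ℕ) := Finset.univ.sigma fun i =>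
    ((B i).support.erase 0).sigma fun n => ((B i).coeff n).support
  let slope : (Σ _ : σ, Σ _ : ℕ, σ →₀ ℕ) → ℚ := fun x => (Finsupp.weight w x.2.2 - w x.1) / x.2.1
  have hmem : ∀ i n d, ⟨i, n, d⟩ ∈ T ↔ n ≠ 0 ∧ coeff d ((B i).coeff n) ≠ 0 := fun i n d => by
    simp only [T, Finset.mem_sigma, Finset.mem_univ, Finset.mem_erase, Polynomial.mem_support_iff,
      mem_support_iff, true_and, and_assoc]
    refine and_congr_right fun _ => and_iff_right_of_imp fun h h0 => h (by rw [h0, coeff_zero])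
  have hT : T.Nonempty := by
    obtain ⟨i, hi⟩ := hB.exists_natDegree_ne_zero
    obtain ⟨d, hd⟩ := MvPolynomial.ne_zero_iff.1 (Polynomial.leadingCoeff_ne_zero.2
      (Polynomial.ne_zero_of_natDegree_gt (Nat.pos_of_ne_zero hi)))
    exact ⟨⟨i, _, d⟩, (hmem _ _ _).2 ⟨hi, hd⟩⟩
  obtain ⟨⟨i₀, n₀, d₀⟩, hx, hmax⟩ := T.exists_max_image slope hT
  obtain ⟨hn₀, hd₀⟩ := (hmem _ _ _).1 hx
  refine ⟨-slope ⟨i₀, n₀, d₀⟩, fun i n d hd => ?_, i₀, n₀, d₀, hn₀, hd₀, ?_⟩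
  · rcases eq_or_ne n 0 with rfl | hn
    · rw [Polynomial.coeff_zero_eq_eval_zero, hB.eval_zero] at hd
      simp [(isWeightedHomogeneous_X R w i) hd]
    · have hle := hmax _ ((hmem i n d).2 ⟨hn, hd⟩)
      rw [div_le_iff₀ (by positivity)] at hle
      rw [nsmul_eq_mul]
      linarith
  · simp only [slope, nsmul_eq_mul]
    field_simp
    ring

theorem weight_optionElim (w : σ → ℚ) (t : ℚ) (n : ℕ) (d : σ →₀ ℕ) :
    Finsupp.weight (fun o : Option σ => o.elim t w) (d.optionElim n)
      = n • t + Finsupp.weight w d := by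
  rw [Finsupp.weight_apply, Finsupp.sum_option_index _ _ (by simp) (by simp [add_smul])]
  simp [Finsupp.weight_apply]

theorem optionEquivLeft_symm_C (P : MvPolynomial σ R) :
    (optionEquivLeft R σ).symm (Polynomial.C P) = rename some P := by
  have hcomp : (optionEquivLeft R σ).symm.toAlgHom.comp
      (Polynomial.CAlgHom (R := R) (A := MvPolynomial σ R)) = rename some :=
    MvPolynomial.algHom_ext fun i => by simp
  exact DFunLike.congr_fun hcomp P

theorem optionEquivLeft_symm_aeval (A : σ → Polynomial (MvPolynomial σ R)) (P : MvPolynomial σ R) :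
    (optionEquivLeft R σ).symm (aeval A P)
      = aeval (fun i => (optionEquivLeft R σ).symm (A i)) P :=
  comp_aeval_apply A (optionEquivLeft R σ).symm.toAlgHom P

theorem coeff_optionEquivLeft_weightedHomogeneousComponent
    (Q : MvPolynomial (Option σ) R) (w : σ → ℚ) (t m : ℚ) (n : ℕ) (d : σ →₀ ℕ) :
    coeff d ((optionEquivLeft R σ
        (weightedHomogeneousComponent (fun o : Option σ => o.elim t w) m Q)).coeff n)
      = if n • t + Finsupp.weight w d = m then coeff d ((optionEquivLeft R σ Q).coeff n)
        else 0 := by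
  rw [optionEquivLeft_coeff_coeff, optionEquivLeft_coeff_coeff, coeff_weightedHomogeneousComponent,
    weight_optionElim]

theorem IsNontrivialDeformation.exists_fixing_isLeadingForm [Finite σ]
    {P G : MvPolynomial σ R} {m : ℚ} (hB : IsNontrivialDeformation B)
    (hfix : aeval B P = Polynomial.C P) (hG : IsLeadingForm w m P G) :
    ∃ A, IsNontrivialDeformation A ∧ aeval A G = Polynomial.C G := by
  obtain ⟨t, hle, i₀, n₀, d₀, hn₀, hd₀, heq⟩ := exists_parameter_weight w hB
  let W : Option σ → ℚ := fun o => o.elim t w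
  let E := optionEquivLeft R σ
  let A' : σ → MvPolynomial (Option σ) R := fun i =>
    weightedHomogeneousComponent W (w i) (E.symm (B i))
  have hlead : ∀ i, IsLeadingForm W (w i) (E.symm (B i)) (A' i) := fun i => by
    refine isLeadingForm_weightedHomogeneousComponent (mem_weightLE.2 fun e he => ?_)
    rw [← Finsupp.optionElim_some e, weight_optionElim]
    refine hle i _ _ ?_
    rwa [← E.apply_symm_apply (B i), optionEquivLeft_coeff_some_coeff_none]
  have hcoeff : ∀ i n d, coeff d ((E (A' i)).coeff n) =
      if n • t + Finsupp.weight w d = w i then coeff d ((B i).coeff n) else 0 := fun i n d => by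
    simp only [A', W, E, coeff_optionEquivLeft_weightedHomogeneousComponent,
      AlgEquiv.apply_symm_apply]
  have hAG : aeval (fun i => E (A' i)) G = Polynomial.C G := by
    have h := (IsLeadingForm.aeval hlead hG).unique (Q' := rename some G)
    rw [← optionEquivLeft_symm_aeval, hfix, optionEquivLeft_symm_C] at h
    apply E.symm.injective
    rw [optionEquivLeft_symm_aeval, optionEquivLeft_symm_C]
    simpa only [E, AlgEquiv.symm_apply_apply] using h (IsLeadingForm.rename some hG)
  refine ⟨fun i => E (A' i), ⟨fun i => ?_, i₀, fun h0 => ?_⟩, hAG⟩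
  · rw [← Polynomial.coeff_zero_eq_eval_zero]
    ext d
    rw [hcoeff, Polynomial.coeff_zero_eq_eval_zero, hB.eval_zero, zero_smul, zero_add]
    refine ite_eq_left_iff.2 fun h => ?_
    exact (not_imp_comm.1 (fun h => isWeightedHomogeneous_X R w i h) h).symm
  · have hcoeff₀ := hcoeff i₀ n₀ d₀
    rw [if_pos heq, Polynomial.coeff_eq_zero_of_natDegree_lt (by omega), coeff_zero] at hcoeff₀
    exact hd₀ hcoeff₀.symm

end DegenerationToLeadingForms

section BinaryForms

variable {σ R K : Type*} [CommRing R] [Field K]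

theorem totalDegree_pow_of_ne_zero [IsDomain R] {P : MvPolynomial σ R} (hP : P ≠ 0) (k : ℕ) :
    (P ^ k).totalDegree = k * P.totalDegree := by
  induction k with
  | zero => simp
  | succ k ih =>
    rw [pow_succ, totalDegree_mul_of_isDomain (pow_ne_zero _ hP) hP, ih, Nat.succ_mul]

theorem totalDegree_aeval_of_totalDegree_ne_zero [IsDomain R] {P : MvPolynomial σ R}
    (hP : P.totalDegree ≠ 0) (h : Polynomial R) :
    (Polynomial.aeval P h).totalDegree = h.natDegree * P.totalDegree := by
  have hP0 : P ≠ 0 := by rintro rfl; simp at hP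
  induction hN : h.natDegree using Nat.strong_induction_on generalizing h with
  | _ N ih =>
  rcases Nat.eq_zero_or_pos N with hN0 | hN0
  · rw [Polynomial.eq_C_of_natDegree_eq_zero (hN.trans hN0), Polynomial.aeval_C, algebraMap_eq,
      totalDegree_C, hN0, zero_mul]
  have hlc : C h.leadingCoeff ≠ (0 : MvPolynomial σ R) := by
    simpa using Polynomial.ne_zero_of_natDegree_gt (hN ▸ hN0)
  have htop : (C h.leadingCoeff * P ^ N).totalDegree = N * P.totalDegree := by
    rw [totalDegree_mul_of_isDomain hlc (pow_ne_zero _ hP0), totalDegree_pow_of_ne_zero hP0,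
      totalDegree_C, zero_add]
  have hlow : (Polynomial.aeval P h.eraseLead).totalDegree < N * P.totalDegree := by
    have hlt : h.eraseLead.natDegree < N := by
      have := Polynomial.eraseLead_natDegree_le h
      omega
    rw [ih _ hlt _ rfl]
    exact Nat.mul_lt_mul_of_pos_right hlt (Nat.pos_of_ne_zero hP)
  rw [← h.eraseLead_add_C_mul_X_pow, hN]
  simp only [map_add, map_mul, map_pow, Polynomial.aeval_C, Polynomial.aeval_X, algebraMap_eq]
  rw [totalDegree_add_eq_right_of_totalDegree_lt (htop ▸ hlow), htop]

theorem exists_eq_C_of_isIntegral {P : MvPolynomial σ K} (hP : IsIntegral K P) :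
    ∃ c, P = C c := by
  refine ⟨_, totalDegree_eq_zero_iff_eq_C.1 (by_contra fun hdeg => ?_)⟩
  have hmin := totalDegree_aeval_of_totalDegree_ne_zero hdeg (minpoly K P)
  rw [minpoly.aeval, totalDegree_zero] at hmin
  exact (mul_pos (minpoly.natDegree_pos hP) (Nat.pos_of_ne_zero hdeg)).ne hmin

theorem exists_C_mul_eq_of_isIntegral_div {L : Type*} [Field L] [Algebra K L]
    [Algebra (MvPolynomial σ K) L] [IsScalarTower K (MvPolynomial σ K) L]
    [IsFractionRing (MvPolynomial σ K) L] {u v : MvPolynomial σ K} (hv : v ≠ 0)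
    (h : IsIntegral K (algebraMap _ L u / algebraMap _ L v)) :
    ∃ c, algebraMap _ L u / algebraMap _ L v = algebraMap K L c ∧ u = C c * v := by
  have hinj : Function.Injective (algebraMap (MvPolynomial σ K) L) := IsFractionRing.injective _ _
  obtain ⟨ρ, hρ⟩ := (IsIntegrallyClosed.isIntegral_iff (R := MvPolynomial σ K)).1
    (h.tower_top (A := MvPolynomial σ K))
  obtain ⟨c, rfl⟩ := exists_eq_C_of_isIntegral
    ((isIntegral_algHom_iff (IsScalarTower.toAlgHom K _ L) hinj).1 (hρ ▸ h))
  refine ⟨c, ?_, hinj ?_⟩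
  · rw [← hρ, ← algebraMap_eq, ← IsScalarTower.algebraMap_apply]
  · rw [map_mul, hρ, div_mul_cancel₀ _ ((map_ne_zero_iff _ hinj).2 hv)]

variable {S : Type*} [CommRing S] [Algebra R S]

theorem aeval_mul_of_isHomogeneous {F : MvPolynomial σ R} {N : ℕ} (hF : F.IsHomogeneous N)
    (x : σ → S) (b : S) : aeval (fun i => x i * b) F = aeval x F * b ^ N := by
  rw [F.as_sum, map_sum, map_sum, Finset.sum_mul]
  refine Finset.sum_congr rfl fun d hd => ?_
  have hdeg : ∏ i ∈ d.support, b ^ d i = b ^ N := by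
    rw [Finset.prod_pow_eq_pow_sum, ← hF (mem_support_iff.1 hd), Finsupp.weight_apply]
    simp [Finsupp.sum]
  simp only [aeval_monomial, Finsupp.prod, mul_pow, Finset.prod_mul_distrib, hdeg, mul_assoc]

theorem aeval_mul_self_of_isHomogeneous {F : MvPolynomial (Fin 2) R} {N : ℕ}
    (hF : F.IsHomogeneous N) (z v : S) :
    aeval ![z * v, v] F
      = Polynomial.aeval z (aeval ![Polynomial.X, (1 : Polynomial R)] F) * v ^ N := by
  have hcomp : (Polynomial.aeval z).comp (aeval ![Polynomial.X, (1 : Polynomial R)])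
      = aeval ![z, (1 : S)] := MvPolynomial.algHom_ext fun i => by fin_cases i <;> simp
  rw [← AlgHom.comp_apply, hcomp, ← aeval_mul_of_isHomogeneous hF]
  congr 2
  ext i
  fin_cases i <;> simp

theorem X_sub_C_mul_X_dvd_of_isRoot {F : MvPolynomial (Fin 2) R} {N : ℕ}
    (hF : F.IsHomogeneous N) {c : R}
    (hc : (aeval ![Polynomial.X, (1 : Polynomial R)] F).IsRoot c) : X 0 - C c * X 1 ∣ F := by
  rw [← Ideal.mem_span_singleton, ← Ideal.Quotient.eq_zero_iff_mem]
  let I := Ideal.span {(X 0 - C c * X 1 : MvPolynomial (Fin 2) R)}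
  let π : MvPolynomial (Fin 2) R →ₐ[R] MvPolynomial (Fin 2) R ⧸ I := Ideal.Quotient.mkₐ R I
  have hX : π (X 0) = algebraMap R _ c * π (X 1) := by
    rw [← AlgHom.commutes π, ← map_mul]
    exact Ideal.Quotient.eq.2 (Ideal.mem_span_singleton_self _)
  have hπ : π = aeval ![algebraMap R _ c * π (X 1), π (X 1)] :=
    MvPolynomial.algHom_ext fun i => by fin_cases i <;> simp [hX]
  change π F = 0
  rw [hπ, aeval_mul_self_of_isHomogeneous hF, Polynomial.aeval_algebraMap_apply,
    Polynomial.coe_aeval_eq_eval, hc, map_zero, zero_mul]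

/-- The quotient `u / v` is a root of the dehomogenization of `F`, hence algebraic over `K`. -/
theorem exists_eq_C_mul_of_aeval_eq_zero {F : MvPolynomial (Fin 2) K} {N : ℕ}
    (hF : F.IsHomogeneous N) (hF0 : F ≠ 0) {u v : MvPolynomial σ K} (hv : v ≠ 0)
    (h : aeval ![u, v] F = 0) : ∃ c, u = C c * v ∧ X 0 - C c * X 1 ∣ F := by
  let L := FractionRing (MvPolynomial σ K)
  let f : Polynomial K := aeval ![Polynomial.X, 1] F
  have hf : f ≠ 0 := by
    rintro hf
    refine hF0 ?_
    rw [← Polynomial.homogenize_eq_of_isHomogeneous hF hf, Polynomial.homogenize_zero]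
  let ι : MvPolynomial σ K →ₐ[K] L := IsScalarTower.toAlgHom K _ L
  have hv' : ι v ≠ 0 := (map_ne_zero_iff _ (IsFractionRing.injective _ L)).2 hv
  have hroot : Polynomial.aeval (ι u / ι v) f = 0 := by
    have hcomp : ι.comp (aeval ![u, v]) = aeval ![ι u / ι v * ι v, ι v] :=
      MvPolynomial.algHom_ext fun i => by fin_cases i <;> simp [div_mul_cancel₀ _ hv']
    have hzero := congrArg ι h
    rw [map_zero, ← AlgHom.comp_apply, hcomp, aeval_mul_self_of_isHomogeneous hF] at hzero
    exact (mul_eq_zero.1 hzero).resolve_right (pow_ne_zero _ hv')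
  obtain ⟨c, hc, huv⟩ :=
    exists_C_mul_eq_of_isIntegral_div hv (IsAlgebraic.isIntegral ⟨f, hf, hroot⟩)
  refine ⟨c, huv, X_sub_C_mul_X_dvd_of_isRoot hF ?_⟩
  have hc' : ι u / ι v = algebraMap K L c := hc
  rw [hc', Polynomial.aeval_algebraMap_apply, map_eq_zero] at hroot
  simpa using hroot

end BinaryForms

section WeightedHomogeneousBinary

variable {R : Type*} [CommRing R]

theorem weight_fin_two (w : Fin 2 → ℚ) (d : Fin 2 →₀ ℕ) :
    Finsupp.weight w d = d 0 * w 0 + d 1 * w 1 := by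
  rw [Finsupp.weight_apply, Finsupp.sum_fintype _ _ (by simp), Fin.sum_univ_two]
  simp

theorem mod_eq_and_div_add_div_eq {i j a b a' b' : ℕ} (hij : i.Coprime j) (hi : 0 < i) (hj : 0 < j)
    (h : j * a + i * b = j * a' + i * b') :
    a % i = a' % i ∧ b % j = b' % j ∧ a / i + b / j = a' / i + b' / j := by
  have ha : a % i = a' % i := Nat.ModEq.cancel_left_of_coprime hij
    (by simpa [Nat.ModEq] using congrArg (· % i) h)
  have hb : b % j = b' % j := Nat.ModEq.cancel_left_of_coprime hij.symm
    (by simpa [Nat.ModEq] using congrArg (· % j) h)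
  refine ⟨ha, hb, Nat.eq_of_mul_eq_mul_left (mul_pos hi hj) ?_⟩
  have ha₁ := Nat.div_add_mod a i
  have ha₂ := Nat.div_add_mod a' i
  have hb₁ := Nat.div_add_mod b j
  have hb₂ := Nat.div_add_mod b' j
  zify at *
  linear_combination j * ha₁ + i * hb₁ - j * ha₂ - i * hb₂ + h - j * ha - i * hb

theorem exists_isHomogeneous_eq_mul_aeval_pow {P : MvPolynomial (Fin 2) R} {i j : ℕ} {m N : ℚ}
    (hij : i.Coprime j) (hi : 0 < i) (hj : 0 < j) (hm : m ≠ 0)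
    (hP : IsWeightedHomogeneous ![m * j, m * i] P N) :
    ∃ (r s n : ℕ) (F : MvPolynomial (Fin 2) R), F.IsHomogeneous n ∧
      P = X 0 ^ r * X 1 ^ s * aeval ![X 0 ^ i, X 1 ^ j] F := by
  rcases eq_or_ne P 0 with rfl | hP0
  · exact ⟨0, 0, 0, 0, isHomogeneous_zero _ _ _, by simp⟩
  obtain ⟨e, he⟩ := support_nonempty.2 hP0
  have hdvd : ∀ d ∈ P.support, d 0 % i = e 0 % i ∧ d 1 % j = e 1 % j ∧
      d 0 / i + d 1 / j = e 0 / i + e 1 / j := fun d hd => by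
    refine mod_eq_and_div_add_div_eq hij hi hj ?_
    have hde := (hP (mem_support_iff.1 hd)).trans (hP (mem_support_iff.1 he)).symm
    simp only [weight_fin_two, Matrix.cons_val_zero, Matrix.cons_val_one] at hde
    have : m * (j * d 0 + i * d 1) = m * (j * e 0 + i * e 1) := by linear_combination hde
    exact_mod_cast mul_left_cancel₀ hm this
  let F : MvPolynomial (Fin 2) R :=
    ∑ d ∈ P.support, C (coeff d P) * (X 0 ^ (d 0 / i) * X 1 ^ (d 1 / j))
  refine ⟨e 0 % i, e 1 % j, e 0 / i + e 1 / j, F, IsHomogeneous.sum _ _ _ fun d hd => ?_, ?_⟩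
  · rw [← (hdvd d hd).2.2]
    exact ((isHomogeneous_X_pow _ _).mul (isHomogeneous_X_pow _ _)).C_mul _
  · conv_lhs => rw [P.as_sum]
    rw [map_sum, Finset.mul_sum]
    refine Finset.sum_congr rfl fun d hd => ?_
    have hX : ∀ (k : Fin 2) (l : ℕ), (X k : MvPolynomial (Fin 2) R) ^ d k
        = X k ^ (d k % l) * (X k ^ l) ^ (d k / l) := fun k l => by
      rw [← pow_mul, ← pow_add, Nat.mod_add_div]
    rw [← (hdvd d hd).1, ← (hdvd d hd).2.1, monomial_eq, Finsupp.prod_fintype _ _ (by simp),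
      Fin.prod_univ_two, hX 0 i, hX 1 j]
    simp only [map_mul, map_pow, aeval_X, aeval_C, algebraMap_eq, Matrix.cons_val_zero,
      Matrix.cons_val_one]
    ring

theorem exists_pow_eq_C_mul_pow_of_aeval_eq_zero {σ K : Type*} [Field K]
    {P : MvPolynomial (Fin 2) K} {i j : ℕ} {m N : ℚ} (hij : i.Coprime j) (hi : 0 < i) (hj : 0 < j)
    (hm : m ≠ 0) (hP0 : P ≠ 0) (hP : IsWeightedHomogeneous ![m * j, m * i] P N)
    {u v : MvPolynomial σ K} (hu : u ≠ 0) (hv : v ≠ 0) (h : aeval ![u, v] P = 0) :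
    ∃ c : K, u ^ i = C c * v ^ j ∧ X 0 ^ i - C c * X 1 ^ j ∣ P := by
  obtain ⟨r, s, n, F, hF, rfl⟩ := exists_isHomogeneous_eq_mul_aeval_pow hij hi hj hm hP
  have hroot : aeval ![u ^ i, v ^ j] F = 0 := by
    have hcomp : (aeval ![u, v]).comp (aeval ![X 0 ^ i, X 1 ^ j])
        = (aeval ![u ^ i, v ^ j] : MvPolynomial (Fin 2) K →ₐ[K] _) :=
      MvPolynomial.algHom_ext fun k => by fin_cases k <;> simp
    rw [map_mul, ← AlgHom.comp_apply, hcomp] at h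
    exact (mul_eq_zero.1 h).resolve_left (by simp [hu, hv])
  have hF0 : F ≠ 0 := by
    rintro rfl
    simp at hP0
  obtain ⟨c, hc, hdvd⟩ := exists_eq_C_mul_of_aeval_eq_zero hF hF0 (pow_ne_zero j hv) hroot
  refine ⟨c, hc, Dvd.dvd.mul_left ?_ _⟩
  simpa using map_dvd (aeval ![X 0 ^ i, X 1 ^ j] : _ →ₐ[K] MvPolynomial (Fin 2) K) hdvd

end WeightedHomogeneousBinary

section DegreeReduction

variable {σ R K : Type*} [CommRing R] [Nontrivial R] [Field K]

theorem totalDegree_algEquiv_X_ne_zero (φ : MvPolynomial σ R ≃ₐ[R] MvPolynomial σ R) (i : σ) :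
    (φ (X i)).totalDegree ≠ 0 := fun h => by
  obtain ⟨c, hc⟩ : ∃ c, φ (X i) = C c := ⟨_, totalDegree_eq_zero_iff_eq_C.1 h⟩
  have hX : X i = C c := φ.injective (hc.trans (φ.commutes c).symm)
  simpa using congrArg totalDegree hX

theorem algEquiv_X_ne_zero (φ : MvPolynomial σ R ≃ₐ[R] MvPolynomial σ R) (i : σ) : φ (X i) ≠ 0 :=
  fun h => totalDegree_algEquiv_X_ne_zero φ i (by rw [h, totalDegree_zero])

theorem exists_mem_vars_algEquiv_X (φ : MvPolynomial σ R ≃ₐ[R] MvPolynomial σ R) (u : σ) :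
    ∃ k, u ∈ (φ (X k)).vars := by
  classical
  have hφ : φ.toAlgHom = bind₁ fun k => φ (X k) := MvPolynomial.algHom_ext (by simp)
  have hu : u ∈ (bind₁ (fun k => φ (X k)) (φ.symm (X u))).vars := by
    rw [← hφ]
    simp [vars_X]
  obtain ⟨k, -, hk⟩ := mem_vars_bind₁ _ _ hu
  exact ⟨k, hk⟩

/-- With the degrees of the coordinates of `φ` as weights, some component of the inverse has weight
larger than the degree `1` of the variable it is mapped to: its leading form is a relation between
the leading forms of the coordinates. -/
theorem exists_isLeadingForm_symm_X_aeval_eq_zero (φ : MvPolynomial σ R ≃ₐ[R] MvPolynomial σ R)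
    {f' : σ → MvPolynomial σ R}
    (hf' : ∀ i, IsLeadingForm (fun _ => (1 : ℚ)) (φ (X i)).totalDegree (φ (X i)) (f' i))
    (hφ : ∃ u, 1 < (φ (X u)).totalDegree) :
    ∃ k m G, G ≠ 0 ∧ aeval f' G = 0 ∧
      IsLeadingForm (fun i => ((φ (X i)).totalDegree : ℚ)) m (φ.symm (X k)) G := by
  obtain ⟨u, hu⟩ := hφ
  obtain ⟨k, hk⟩ := exists_mem_vars_algEquiv_X φ.symm u
  obtain ⟨d, hd, hdu⟩ := (mem_vars_iff_mem_support (i := u)).1 hk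
  let w : σ → ℚ := fun i => (φ (X i)).totalDegree
  obtain ⟨m, G, hG0, hG⟩ := exists_isLeadingForm_ne_zero w (algEquiv_X_ne_zero φ.symm k)
  have hw : ∀ i, 0 ≤ w i := fun _ => Nat.cast_nonneg _
  have hwu : w u ≤ Finsupp.weight w d :=
    Finsupp.le_weight_of_ne_zero hw (Finsupp.mem_support_iff.1 hdu)
  have hu' : 1 < w u := Nat.one_lt_cast.2 hu
  have hm : 1 < m :=
    hu'.trans_le (hwu.trans (mem_weightLE.1 hG.mem_weightLE d (mem_support_iff.1 hd)))
  refine ⟨k, m, G, hG0, ?_, hG⟩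
  have haeval : aeval (fun i => φ (X i)) = (φ : MvPolynomial σ R →ₐ[R] MvPolynomial σ R) :=
    MvPolynomial.algHom_ext (by simp)
  have hlead := IsLeadingForm.aeval hf' hG
  rw [haeval, AlgEquiv.coe_toAlgHom, φ.apply_symm_apply] at hlead
  refine hlead.unique (isLeadingForm_zero_iff.2 (weightLE_le_weightLT hm ?_))
  exact mem_weightLE_of_isWeightedHomogeneous (isWeightedHomogeneous_X R _ k)

variable {φ : MvPolynomial (Fin 2) K ≃ₐ[K] MvPolynomial (Fin 2) K}

theorem eq_one_of_cusp_dvd_isLeadingForm_symm_X {w : Fin 2 → ℚ} {m : ℚ} {k : Fin 2}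
    {G : MvPolynomial (Fin 2) K} (hG0 : G ≠ 0) (hG : IsLeadingForm w m (φ.symm (X k)) G) {i j : ℕ}
    (hi : 0 < i) (hle : i ≤ j) (hij : i.Coprime j) {c : K} (hc : c ≠ 0)
    (hdvd : X 0 ^ i - C c * X 1 ^ j ∣ G) : i = 1 := by
  by_contra hi1
  obtain ⟨l, hl⟩ := exists_ne k
  obtain ⟨B, hB, hfix⟩ := exists_isNontrivialDeformation_fixing_symm_X φ l
  obtain ⟨A, hA, hAG⟩ := hB.exists_fixing_isLeadingForm (hfix k hl.symm) hG
  have hcusp := hA.fixes_of_dvd hG0 hAG hdvd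
  obtain ⟨h0, h1⟩ := natDegree_eq_zero_of_cusp (a := A 0) (b := A 1) (by omega) (by omega) hij hc
    (zero_ne_one (α := Fin 2)) (by simpa using hcusp)
  obtain ⟨r, hr⟩ := hA.exists_natDegree_ne_zero
  fin_cases r
  exacts [hr h0, hr h1]

/-- The degree reduction step of the Jung–van der Kulk theorem. -/
theorem exists_totalDegree_sub_C_mul_pow_lt (hle : (φ (X 1)).totalDegree ≤ (φ (X 0)).totalDegree)
    (hφ : 1 < (φ (X 0)).totalDegree) :
    ∃ (c : K) (j : ℕ), (φ (X 0)).totalDegree = j * (φ (X 1)).totalDegree ∧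
      (φ (X 0) - C c * φ (X 1) ^ j).totalDegree < (φ (X 0)).totalDegree := by
  choose f' hf'0 hf' using fun i => exists_isLeadingForm_totalDegree (algEquiv_X_ne_zero φ i)
  obtain ⟨k, N, G, hG0, hfG, hG⟩ := exists_isLeadingForm_symm_X_aeval_eq_zero φ hf' ⟨0, hφ⟩
  have hdeg := fun i => Nat.pos_of_ne_zero (totalDegree_algEquiv_X_ne_zero φ i)
  obtain ⟨j, i, hji, hj, hi⟩ :=
    Nat.exists_coprime (φ (X 0)).totalDegree (φ (X 1)).totalDegree
  set m := Nat.gcd (φ (X 0)).totalDegree (φ (X 1)).totalDegree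
  have hm : 0 < m := Nat.gcd_pos_of_pos_left _ (hdeg 0)
  have hi0 : 0 < i := pos_of_mul_pos_left (hi ▸ hdeg 1) m.zero_le
  have hj0 : 0 < j := pos_of_mul_pos_left (hj ▸ hdeg 0) m.zero_le
  have hw : (fun i => ((φ (X i)).totalDegree : ℚ)) = ![(m : ℚ) * j, (m : ℚ) * i] := by
    ext r
    fin_cases r <;> simp [hi, hj, mul_comm]
  have heta : f' = ![f' 0, f' 1] := funext fun r => by fin_cases r <;> rfl
  obtain ⟨c, hc, hdvd⟩ := exists_pow_eq_C_mul_pow_of_aeval_eq_zero hji.symm hi0 hj0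
    (by exact_mod_cast hm.ne') hG0 (hw ▸ hG.1) (hf'0 0) (hf'0 1) (heta ▸ hfG)
  have hc0 : c ≠ 0 := by
    rintro rfl
    simp [hf'0 0, hi0.ne'] at hc
  have hij : i ≤ j := Nat.le_of_mul_le_mul_right (hi ▸ hj ▸ hle) hm
  obtain rfl := eq_one_of_cusp_dvd_isLeadingForm_symm_X hG0 hG hi0 hij hji.symm hc0 hdvd
  have hab : (φ (X 0)).totalDegree = j * (φ (X 1)).totalDegree := by rw [hj, hi, one_mul]
  exact ⟨c, j, hab, (hf' 0).totalDegree_sub_C_mul_pow_lt (hf' 1) hab (hdeg 0) (by simpa using hc)⟩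

end DegreeReduction

section Elementary

/-- The automorphisms `(f, g)` of the affine plane, where `f` and `g` are the images of `X 0` and
`X 1`. -/
abbrev PlaneAut (R : Type*) [CommSemiring R] :=
  MvPolynomial (Fin 2) R ≃ₐ[R] MvPolynomial (Fin 2) R

section CommRing

variable {R : Type*} [CommRing R]

theorem PlaneAut.ext {φ ψ : PlaneAut R} (h₀ : φ (X 0) = ψ (X 0)) (h₁ : φ (X 1) = ψ (X 1)) :
    φ = ψ :=
  AlgEquiv.coe_toAlgHom_injective
    (MvPolynomial.algHom_ext fun i => by fin_cases i <;> assumption)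

/-- The automorphism `(x + h(y), y)`. -/
noncomputable def elementaryAut (h : Polynomial R) : PlaneAut R :=
  AlgEquiv.ofAlgHom (aeval ![X 0 + Polynomial.aeval (X 1) h, X 1])
    (aeval ![X 0 - Polynomial.aeval (X 1) h, X 1])
    (MvPolynomial.algHom_ext fun i => by fin_cases i <;> simp [← Polynomial.aeval_algHom_apply])
    (MvPolynomial.algHom_ext fun i => by fin_cases i <;> simp [← Polynomial.aeval_algHom_apply])

theorem mul_elementaryAut_X_zero (φ : PlaneAut R) (h : Polynomial R) :
    (φ * elementaryAut h) (X 0) = φ (X 0) + Polynomial.aeval (φ (X 1)) h := by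
  simp [elementaryAut, AlgEquiv.mul_apply, ← Polynomial.aeval_algHom_apply φ]

theorem mul_elementaryAut_X_one (φ : PlaneAut R) (h : Polynomial R) :
    (φ * elementaryAut h) (X 1) = φ (X 1) := by
  simp [elementaryAut, AlgEquiv.mul_apply]

/-- The swap `(y, x)`. -/
noncomputable def swapAut (R : Type*) [CommRing R] : PlaneAut R := renameEquiv R (Equiv.swap 0 1)

theorem mul_swapAut_X_zero (φ : PlaneAut R) : (φ * swapAut R) (X 0) = φ (X 1) := by
  simp [swapAut, AlgEquiv.mul_apply]

theorem mul_swapAut_X_one (φ : PlaneAut R) : (φ * swapAut R) (X 1) = φ (X 0) := by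
  simp [swapAut, AlgEquiv.mul_apply]

/-- The swap and the shears `(x, y + c x)`: representatives of the cosets of the triangular
automorphisms in the linear ones, indexed by the points of the projective line. -/
noncomputable def lineAut : Option R → PlaneAut R
  | none => swapAut R
  | some c => swapAut R * elementaryAut (Polynomial.C c * Polynomial.X) * swapAut R

theorem mul_lineAut_none_X_zero (φ : PlaneAut R) :
    (φ * (lineAut none : PlaneAut R)) (X 0) = φ (X 1) :=
  mul_swapAut_X_zero φ

theorem mul_lineAut_none_X_one (φ : PlaneAut R) :
    (φ * (lineAut none : PlaneAut R)) (X 1) = φ (X 0) :=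
  mul_swapAut_X_one φ

theorem mul_lineAut_some_X_zero (φ : PlaneAut R) (c : R) :
    (φ * lineAut (some c)) (X 0) = φ (X 0) := by
  rw [lineAut, ← mul_assoc, ← mul_assoc, mul_swapAut_X_zero, mul_elementaryAut_X_one,
    mul_swapAut_X_one]

theorem mul_lineAut_some_X_one (φ : PlaneAut R) (c : R) :
    (φ * lineAut (some c)) (X 1) = φ (X 1) + C c * φ (X 0) := by
  rw [lineAut, ← mul_assoc, ← mul_assoc, mul_swapAut_X_one, mul_elementaryAut_X_zero,
    mul_swapAut_X_zero, mul_swapAut_X_one, map_mul, Polynomial.aeval_C, Polynomial.aeval_X,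
    algebraMap_eq]

theorem autDeg_pos [Nontrivial R] (φ : PlaneAut R) : 0 < autDeg φ :=
  lt_max_of_lt_left (Nat.pos_of_ne_zero (totalDegree_algEquiv_X_ne_zero φ 0))

theorem totalDegree_add_C_mul_le_max {σ : Type*} (P Q : MvPolynomial σ R) (c : R) :
    (P + C c * Q).totalDegree ≤ max P.totalDegree Q.totalDegree := by
  rw [C_mul']
  exact (totalDegree_add _ _).trans (max_le_max_left _ (totalDegree_smul_le _ _))

theorem autDeg_mul_lineAut {ψ : PlaneAut R}
    (hψ : (ψ (X 1)).totalDegree < (ψ (X 0)).totalDegree) (M : Option R) :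
    autDeg (ψ * lineAut M) = (ψ (X 0)).totalDegree := by
  cases M with
  | none => rw [autDeg, mul_lineAut_none_X_zero, mul_lineAut_none_X_one, max_eq_right hψ.le]
  | some c =>
    rw [autDeg, mul_lineAut_some_X_zero, mul_lineAut_some_X_one]
    exact max_eq_left ((totalDegree_add_C_mul_le_max _ _ _).trans_eq (max_eq_right hψ.le))

end CommRing

variable {K : Type*} [Field K] {φ ψ χ : PlaneAut K}

theorem exists_totalDegree_sub_C_mul_lt (hφ : 1 < (φ (X 0)).totalDegree)
    (hle : (φ (X 1)).totalDegree ≤ (φ (X 0)).totalDegree) :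
    ∃ c : K, (φ (X 1) - C c * φ (X 0)).totalDegree < (φ (X 0)).totalDegree := by
  rcases hle.lt_or_eq with hlt | heq
  · exact ⟨0, by simpa using hlt⟩
  obtain ⟨c, j, hj, hlt⟩ := exists_totalDegree_sub_C_mul_pow_lt (φ := φ * swapAut K)
    (by rw [mul_swapAut_X_zero, mul_swapAut_X_one, heq]) (by rwa [mul_swapAut_X_zero, heq])
  rw [mul_swapAut_X_zero, mul_swapAut_X_one, heq] at hj hlt
  obtain rfl : j = 1 := Nat.eq_of_mul_eq_mul_right (zero_lt_one.trans hφ) (by rw [← hj, one_mul])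
  exact ⟨c, by rwa [pow_one] at hlt⟩

theorem exists_eq_mul_lineAut (hφ : 1 < autDeg φ) :
    ∃ (M : Option K) (ψ : PlaneAut K), φ = ψ * lineAut M ∧
      (ψ (X 1)).totalDegree < (ψ (X 0)).totalDegree := by
  rcases lt_or_ge (φ (X 0)).totalDegree (φ (X 1)).totalDegree with hlt | hle
  · refine ⟨none, φ * swapAut K, PlaneAut.ext ?_ ?_, ?_⟩
    · rw [mul_lineAut_none_X_zero, mul_swapAut_X_one]
    · rw [mul_lineAut_none_X_one, mul_swapAut_X_zero]
    · rwa [mul_swapAut_X_zero, mul_swapAut_X_one]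
  · rw [autDeg, max_eq_left hle] at hφ
    obtain ⟨c, hc⟩ := exists_totalDegree_sub_C_mul_lt hφ hle
    refine ⟨some c, φ * lineAut (some (-c)), PlaneAut.ext ?_ ?_, ?_⟩
    · rw [mul_lineAut_some_X_zero, mul_lineAut_some_X_zero]
    · rw [mul_lineAut_some_X_one, mul_lineAut_some_X_one, mul_lineAut_some_X_zero, C_neg]
      ring
    · rwa [mul_lineAut_some_X_zero, mul_lineAut_some_X_one, C_neg, neg_mul, ← sub_eq_add_neg]

theorem exists_totalDegree_sub_aeval_le (φ : PlaneAut K) :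
    ∃ h : Polynomial K, Polynomial.X ^ 2 ∣ h ∧
      (φ (X 0) - Polynomial.aeval (φ (X 1)) h).totalDegree ≤ (φ (X 1)).totalDegree := by
  induction hN : (φ (X 0)).totalDegree using Nat.strong_induction_on generalizing φ with
  | _ N ih =>
  subst hN
  rcases le_or_gt (φ (X 0)).totalDegree (φ (X 1)).totalDegree with hle | hlt
  · exact ⟨0, dvd_zero _, by simpa using hle⟩
  have hpos := Nat.pos_of_ne_zero (totalDegree_algEquiv_X_ne_zero φ 1)
  obtain ⟨c, j, hj, hdeg⟩ := exists_totalDegree_sub_C_mul_pow_lt hlt.le (by omega)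
  have hj2 : 2 ≤ j := by
    by_contra! hj1
    have := Nat.mul_le_mul_right (φ (X 1)).totalDegree (Nat.le_of_lt_succ hj1)
    omega
  let k : Polynomial K := Polynomial.C c * Polynomial.X ^ j
  have hk : Polynomial.aeval (φ (X 1)) k = C c * φ (X 1) ^ j := by
    simp [k, algebraMap_eq]
  have hφk : (φ * elementaryAut (-k)) (X 0) = φ (X 0) - C c * φ (X 1) ^ j := by
    rw [mul_elementaryAut_X_zero, map_neg, hk, sub_eq_add_neg]
  obtain ⟨h, hh, hle⟩ := ih _ hdeg (φ * elementaryAut (-k)) (by rw [hφk])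
  rw [hφk, mul_elementaryAut_X_one, sub_sub, add_comm, ← hk, ← map_add] at hle
  exact ⟨h + k, dvd_add hh ((pow_dvd_pow _ hj2).mul_left _), hle⟩

theorem exists_eq_mul_elementaryAut_mul_lineAut (hφ : 1 < autDeg φ) :
    ∃ (M : Option K) (h : Polynomial K) (ψ : PlaneAut K),
      φ = ψ * elementaryAut h * lineAut M ∧ Polynomial.X ^ 2 ∣ h ∧
      autDeg φ = h.natDegree * autDeg ψ ∧ autDeg ψ < autDeg φ := by
  obtain ⟨M, φ', rfl, hlt⟩ := exists_eq_mul_lineAut hφ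
  obtain ⟨h, hh, hle⟩ := exists_totalDegree_sub_aeval_le φ'
  let ψ : PlaneAut K := φ' * elementaryAut (-h)
  have hψ₀ : ψ (X 0) = φ' (X 0) - Polynomial.aeval (φ' (X 1)) h := by
    rw [mul_elementaryAut_X_zero, map_neg, sub_eq_add_neg]
  have hψ₁ : ψ (X 1) = φ' (X 1) := mul_elementaryAut_X_one _ _
  have hφ' : φ' = ψ * elementaryAut h := PlaneAut.ext
    (by rw [mul_elementaryAut_X_zero, hψ₀, hψ₁, sub_add_cancel])
    (by rw [mul_elementaryAut_X_one, hψ₁])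
  have hψ : autDeg ψ = (φ' (X 1)).totalDegree := by rw [autDeg, hψ₀, hψ₁, max_eq_right hle]
  have hdeg : (φ' (X 0)).totalDegree = h.natDegree * (φ' (X 1)).totalDegree := by
    rw [← totalDegree_aeval_of_totalDegree_ne_zero (totalDegree_algEquiv_X_ne_zero φ' 1),
      ← sub_sub_cancel (φ' (X 0)) (Polynomial.aeval _ h), sub_eq_add_neg (φ' (X 0)),
      totalDegree_add_eq_left_of_totalDegree_lt (by rw [totalDegree_neg]; omega)]
  refine ⟨M, h, ψ, by rw [← hφ'], hh, ?_, ?_⟩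
  · rw [autDeg_mul_lineAut hlt, hdeg, hψ]
  · rwa [autDeg_mul_lineAut hlt, hψ]

section Uniqueness

variable {h k : Polynomial K}

theorem totalDegree_mul_elementaryAut_X_zero (hψ : (ψ (X 0)).totalDegree ≤ (ψ (X 1)).totalDegree)
    (hh : 1 < h.natDegree) :
    ((ψ * elementaryAut h) (X 0)).totalDegree = h.natDegree * (ψ (X 1)).totalDegree := by
  have hpos := totalDegree_algEquiv_X_ne_zero ψ 1
  rw [mul_elementaryAut_X_zero, totalDegree_add_eq_right_of_totalDegree_lt] <;>
    rw [totalDegree_aeval_of_totalDegree_ne_zero hpos]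
  exact hψ.trans_lt (lt_mul_of_one_lt_left (Nat.pos_of_ne_zero hpos) hh)

theorem totalDegree_mul_elementaryAut_X_one_lt
    (hψ : (ψ (X 0)).totalDegree ≤ (ψ (X 1)).totalDegree) (hh : 1 < h.natDegree) :
    ((ψ * elementaryAut h) (X 1)).totalDegree < ((ψ * elementaryAut h) (X 0)).totalDegree := by
  rw [totalDegree_mul_elementaryAut_X_zero hψ hh, mul_elementaryAut_X_one]
  exact lt_mul_of_one_lt_left (Nat.pos_of_ne_zero (totalDegree_algEquiv_X_ne_zero ψ 1)) hh

theorem eq_and_eq_of_mul_elementaryAut_eq (hψ : (ψ (X 0)).totalDegree ≤ (ψ (X 1)).totalDegree)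
    (hχ : (χ (X 0)).totalDegree ≤ (χ (X 1)).totalDegree) (hh : Polynomial.X ^ 2 ∣ h)
    (hk : Polynomial.X ^ 2 ∣ k) (heq : ψ * elementaryAut h = χ * elementaryAut k) :
    h = k ∧ ψ = χ := by
  have h₁ : ψ (X 1) = χ (X 1) := by
    rw [← mul_elementaryAut_X_one ψ h, heq, mul_elementaryAut_X_one]
  have h₀ : ψ (X 0) + Polynomial.aeval (ψ (X 1)) h = χ (X 0) + Polynomial.aeval (ψ (X 1)) k := by
    rw [← mul_elementaryAut_X_zero, heq, mul_elementaryAut_X_zero, h₁]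
  have hsub : Polynomial.aeval (ψ (X 1)) (h - k) = χ (X 0) - ψ (X 0) := by
    rw [map_sub]
    linear_combination h₀
  have hpos := totalDegree_algEquiv_X_ne_zero ψ 1
  have hdeg : (h - k).natDegree * (ψ (X 1)).totalDegree ≤ 1 * (ψ (X 1)).totalDegree := by
    rw [← totalDegree_aeval_of_totalDegree_ne_zero hpos, hsub, one_mul]
    exact (totalDegree_sub _ _).trans (max_le (hχ.trans_eq (congrArg totalDegree h₁.symm)) hψ)
  have hlt : (h - k).natDegree < (Polynomial.X ^ 2 : Polynomial K).natDegree := by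
    rw [Polynomial.natDegree_X_pow]
    exact Nat.lt_succ_of_le (Nat.le_of_mul_le_mul_right hdeg (Nat.pos_of_ne_zero hpos))
  have hhk : h = k := sub_eq_zero.1 (Polynomial.eq_zero_of_dvd_of_natDegree_lt (dvd_sub hh hk) hlt)
  subst hhk
  exact ⟨rfl, mul_right_cancel heq⟩

theorem eq_of_mul_lineAut_eq (hψ : (ψ (X 1)).totalDegree < (ψ (X 0)).totalDegree)
    (hχ : (χ (X 1)).totalDegree < (χ (X 0)).totalDegree) {M N : Option K}
    (heq : ψ * lineAut M = χ * lineAut N) : M = N := by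
  have hdeg : (ψ (X 0)).totalDegree = (χ (X 0)).totalDegree := by
    rw [← autDeg_mul_lineAut hψ M, heq, autDeg_mul_lineAut hχ]
  have h₀ := DFunLike.congr_fun heq (X 0)
  have h₁ := DFunLike.congr_fun heq (X 1)
  match M, N with
  | none, none => rfl
  | none, some d =>
    rw [mul_lineAut_none_X_zero, mul_lineAut_some_X_zero] at h₀
    exact absurd (hdeg.trans (congrArg totalDegree h₀).symm) hψ.ne'
  | some c, none =>
    rw [mul_lineAut_none_X_zero, mul_lineAut_some_X_zero] at h₀
    exact absurd (hdeg.symm.trans (congrArg totalDegree h₀)) hχ.ne'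
  | some c, some d =>
    rw [mul_lineAut_some_X_zero, mul_lineAut_some_X_zero] at h₀
    rw [mul_lineAut_some_X_one, mul_lineAut_some_X_one, h₀] at h₁
    have hsub : C (c - d) * χ (X 0) = χ (X 1) + C (-1) * ψ (X 1) := by
      rw [C_sub, C_neg, C_1]
      linear_combination h₁
    have hlt := (totalDegree_add_C_mul_le_max (χ (X 1)) (ψ (X 1)) (-1)).trans_lt
      (max_lt hχ (hdeg ▸ hψ))
    by_contra hne
    have hcd : c - d ≠ 0 := sub_ne_zero.2 fun h => hne (congrArg some h)
    rw [← hsub, totalDegree_mul_of_isDomain (C_ne_zero.2 hcd) (algEquiv_X_ne_zero χ 0),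
      totalDegree_C, zero_add] at hlt
    exact hlt.false

end Uniqueness

end Elementary

section Counting

/-- The polynomials `h` of degree `d` without terms of degree `0` and `1`, for which `(x + h(y), y)`
represent the cosets of the affine automorphisms in the triangular ones. -/
def elementaryPolys (R : Type*) [Semiring R] (d : ℕ) : Set (Polynomial R) :=
  {h | Polynomial.X ^ 2 ∣ h ∧ h.natDegree = d}

/-- The automorphisms of degree `n`, of which there are `p_n`. -/
def autsOfDegree (R : Type*) [CommSemiring R] (n : ℕ) : Set (PlaneAut R) :=
  {φ | autDeg φ = n}

/-- The automorphism `ψ ∘ (x + h(y), y) ∘ M` given by the data of one decomposition step. -/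
noncomputable def compositeAut {R : Type*} [CommRing R]
    (x : Option R × Polynomial R × PlaneAut R) : PlaneAut R :=
  x.2.2 * elementaryAut x.2.1 * lineAut x.1

/-- The data `(M, h, ψ)` of the decompositions with `deg h = d` and `deg ψ = m`. -/
def decompositionData (R : Type*) [CommSemiring R] (d m : ℕ) :
    Set (Option R × Polynomial R × PlaneAut R) :=
  Set.univ ×ˢ elementaryPolys R d ×ˢ autsOfDegree R m

section Field

variable {K : Type*} [Field K]

theorem autsOfDegree_zero {R : Type*} [CommRing R] [Nontrivial R] : autsOfDegree R 0 = ∅ :=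
  Set.eq_empty_of_forall_notMem fun φ hφ => (autDeg_pos φ).ne' hφ

theorem autsOfDegree_subset {n : ℕ} (hn : 1 < n) : autsOfDegree K n ⊆
    ⋃ m ∈ n.properDivisors, compositeAut '' decompositionData K (n / m) m := by
  rintro φ rfl
  obtain ⟨M, h, ψ, hφ, hh, hdeg, hlt⟩ := exists_eq_mul_elementaryAut_mul_lineAut hn
  have hdiv : h.natDegree = autDeg φ / autDeg ψ := by
    rw [hdeg, Nat.mul_div_cancel _ (autDeg_pos ψ)]
  exact Set.mem_biUnion (Nat.mem_properDivisors.2 ⟨hdeg ▸ dvd_mul_left _ _, hlt⟩)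
    ⟨(M, h, ψ), ⟨trivial, ⟨hh, hdiv⟩, rfl⟩, hφ.symm⟩

theorem totalDegree_eq_one_of_mem_autsOfDegree_one {ψ : PlaneAut K} (hψ : ψ ∈ autsOfDegree K 1)
    (i : Fin 2) : (ψ (X i)).totalDegree = 1 := by
  have hle := max_le_iff.1 (le_of_eq hψ)
  refine le_antisymm ?_ (Nat.one_le_iff_ne_zero.2 (totalDegree_algEquiv_X_ne_zero ψ i))
  fin_cases i
  exacts [hle.1, hle.2]

theorem injOn_compositeAut {d : ℕ} (hd : 1 < d) :
    Set.InjOn compositeAut (decompositionData K d 1) := by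
  rintro ⟨M, h, ψ⟩ ⟨-, ⟨hh, rfl⟩, hψ⟩ ⟨N, k, χ⟩ ⟨-, ⟨hk, hkd⟩, hχ⟩ heq
  have hle : ∀ ω ∈ autsOfDegree K 1, (ω (X 0)).totalDegree ≤ (ω (X 1)).totalDegree := by
    intro ω hω
    simp only [totalDegree_eq_one_of_mem_autsOfDegree_one hω, le_refl]
  obtain rfl : M = N := eq_of_mul_lineAut_eq
    (totalDegree_mul_elementaryAut_X_one_lt (hle ψ hψ) hd)
    (totalDegree_mul_elementaryAut_X_one_lt (hle χ hχ) (hd.trans_eq hkd.symm)) heq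
  obtain ⟨rfl, rfl⟩ :=
    eq_and_eq_of_mul_elementaryAut_eq (hle ψ hψ) (hle χ hχ) hh hk (mul_right_cancel heq)
  rfl

theorem mapsTo_compositeAut {d : ℕ} (hd : 1 < d) :
    Set.MapsTo compositeAut (decompositionData K d 1) (autsOfDegree K d) := by
  rintro ⟨M, h, ψ⟩ ⟨-, ⟨-, rfl⟩, hψ⟩
  have hone := totalDegree_eq_one_of_mem_autsOfDegree_one hψ
  have hle : (ψ (X 0)).totalDegree ≤ (ψ (X 1)).totalDegree := by rw [hone, hone]
  exact (autDeg_mul_lineAut (totalDegree_mul_elementaryAut_X_one_lt hle hd) M).trans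
    (by rw [totalDegree_mul_elementaryAut_X_zero hle hd, hone, mul_one])

theorem elementaryPolys_eq_image (d : ℕ) : elementaryPolys K (d + 2) =
    (Polynomial.X ^ 2 * ·) '' {g : Polynomial K | g.degree = d} := by
  have hdeg (g : Polynomial K) :
      (Polynomial.X ^ 2 * g).natDegree = d + 2 ↔ g.degree = d := by
    rw [← Polynomial.degree_eq_iff_natDegree_eq_of_pos (by omega), Polynomial.degree_mul,
      Polynomial.degree_X_pow, add_comm, Nat.cast_add]
    exact WithBot.add_right_inj (WithBot.natCast_ne_bot 2)
  ext h
  constructor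
  · rintro ⟨⟨g, rfl⟩, hg⟩
    exact ⟨g, (hdeg g).1 hg, rfl⟩
  · rintro ⟨g, hg, rfl⟩
    exact ⟨dvd_mul_right _ _, (hdeg g).2 hg⟩

end Field

section FiniteField

variable (F : Type*) [Field F]

theorem finite_degreeLT [Finite F] (d : ℕ) :
    (Polynomial.degreeLT F d : Set (Polynomial F)).Finite :=
  Set.finite_coe_iff.1 (Finite.of_equiv _ (Polynomial.degreeLTEquiv F d).symm.toEquiv)

theorem finite_elementaryPolys [Finite F] (d : ℕ) : (elementaryPolys F d).Finite :=
  (finite_degreeLT F (d + 1)).subset fun h hh => Polynomial.mem_degreeLT.2 <|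
    Polynomial.degree_le_natDegree.trans_lt (by rw [hh.2]; exact_mod_cast d.lt_succ_self)

variable {F} in
theorem finite_decompositionData [Finite F] {m : ℕ} (hm : (autsOfDegree F m).Finite) (d : ℕ) :
    (decompositionData F d m).Finite :=
  Set.finite_univ.prod ((finite_elementaryPolys F d).prod hm)

variable [Fintype F]

theorem ncard_degreeLT (d : ℕ) :
    (Polynomial.degreeLT F d : Set (Polynomial F)).ncard = Fintype.card F ^ d := by
  rw [← Nat.card_coe_set_eq, SetLike.coe_sort_coe,
    Nat.card_congr (Polynomial.degreeLTEquiv F d).toEquiv, Nat.card_fun, Nat.card_fin,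
    Nat.card_eq_fintype_card]

theorem ncard_degree_eq (d : ℕ) :
    {g : Polynomial F | g.degree = d}.ncard = (Fintype.card F - 1) * Fintype.card F ^ d := by
  have hdiff : {g : Polynomial F | g.degree = d} =
      (Polynomial.degreeLT F (d + 1) : Set (Polynomial F)) \ Polynomial.degreeLT F d := by
    ext g
    rw [Set.mem_ofPred_eq, Set.mem_sdiff, Polynomial.degreeLT_succ_eq_degreeLE, SetLike.mem_coe,
      SetLike.mem_coe, Polynomial.mem_degreeLE, Polynomial.mem_degreeLT, not_lt, le_antisymm_iff]
  rw [hdiff, Set.ncard_sdiff (SetLike.coe_subset_coe.2 (Polynomial.degreeLT_mono d.le_succ))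
    (finite_degreeLT F d), ncard_degreeLT, ncard_degreeLT, pow_succ', Nat.sub_one_mul]

theorem ncard_elementaryPolys (d : ℕ) :
    (elementaryPolys F (d + 2)).ncard = (Fintype.card F - 1) * Fintype.card F ^ d := by
  rw [elementaryPolys_eq_image, Set.ncard_image_of_injective _
    (mul_right_injective₀ (pow_ne_zero 2 Polynomial.X_ne_zero)), ncard_degree_eq]

theorem ncard_decompositionData {d : ℕ} (hd : 2 ≤ d) (m : ℕ) :
    (decompositionData F d m).ncard =
      (Fintype.card F + 1) * ((Fintype.card F - 1) * Fintype.card F ^ (d - 2)) *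
        (autsOfDegree F m).ncard := by
  obtain ⟨e, rfl⟩ := Nat.exists_eq_add_of_le' hd
  rw [decompositionData, Set.ncard_prod, Set.ncard_prod, ncard_elementaryPolys, Set.ncard_univ,
    Finite.card_option, Nat.card_eq_fintype_card, Nat.add_sub_cancel, ← mul_assoc]

end FiniteField

end Counting

section Affine

open Matrix

variable {σ R K : Type*} [Fintype σ] [CommRing R] [Field K]

/-- The polynomial `c + ∑ aᵢ xᵢ` of degree at most `1`. -/
noncomputable def affinePoly (c : R) (a : σ → R) : MvPolynomial σ R :=
  C c + ∑ i, C (a i) * X i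

theorem coeff_zero_affinePoly (c : R) (a : σ → R) : coeff 0 (affinePoly c a) = c := by
  simp [affinePoly, coeff_sum]

theorem coeff_single_affinePoly (c : R) (a : σ → R) (i : σ) :
    coeff (Finsupp.single i 1) (affinePoly c a) = a i := by
  classical
  simp [affinePoly, coeff_sum, coeff_C, coeff_X, Finsupp.single_left_inj,
    eq_comm (a := (0 : σ →₀ ℕ))]

theorem affinePoly_injective :
    Function.Injective2 (affinePoly : R → (σ → R) → MvPolynomial σ R) := by
  intro c c' a a' h
  refine ⟨?_, funext fun i => ?_⟩
  · rw [← coeff_zero_affinePoly c a, h, coeff_zero_affinePoly]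
  · rw [← coeff_single_affinePoly c a, h, coeff_single_affinePoly]

theorem totalDegree_affinePoly_le (c : R) (a : σ → R) : (affinePoly c a).totalDegree ≤ 1 := by
  refine (totalDegree_add _ _).trans (max_le (by simp) (totalDegree_finsetSum_le fun i _ => ?_))
  rw [C_mul']
  exact (totalDegree_smul_le _ _).trans (isHomogeneous_X R i).totalDegree_le

theorem exists_eq_affinePoly {P : MvPolynomial σ R} (hP : P.totalDegree ≤ 1) :
    ∃ c a, P = affinePoly c a := by
  refine ⟨coeff 0 P, fun i => coeff (Finsupp.single i 1) P, ?_⟩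
  ext d
  rcases Nat.lt_trichotomy d.degree 1 with hd | hd | hd
  · obtain rfl : d = 0 := (Finsupp.degree_eq_zero_iff d).1 (Nat.lt_one_iff.1 hd)
    rw [coeff_zero_affinePoly]
  · obtain ⟨i, rfl⟩ : ∃ i, d = Finsupp.single i 1 := (Finsupp.sum_eq_one_iff d).1 hd
    rw [coeff_single_affinePoly]
  · rw [coeff_eq_zero_of_totalDegree_lt (hP.trans_lt hd),
      coeff_eq_zero_of_totalDegree_lt ((totalDegree_affinePoly_le _ _).trans_lt hd)]

theorem map_affinePoly (f : MvPolynomial σ R →ₐ[R] MvPolynomial σ R) {v : σ → R}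
    {A : Matrix σ σ R} (hf : ∀ i, f (X i) = affinePoly (v i) (A i)) (c : R) (a : σ → R) :
    f (affinePoly c a) = affinePoly (c + a ⬝ᵥ v) (a ᵥ* A) := by
  have hC : ∀ r : R, f (C r) = C r := f.commutes
  simp only [affinePoly, map_add, map_sum, map_mul, hC, hf, dotProduct, vecMul, mul_add,
    Finset.mul_sum, Finset.sum_mul, Finset.sum_add_distrib, mul_assoc, add_assoc]
  rw [Finset.sum_comm]

/-- The substitution `x ↦ v + A x`. -/
noncomputable def affineHom (A : Matrix σ σ R) (v : σ → R) :
    MvPolynomial σ R →ₐ[R] MvPolynomial σ R :=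
  aeval fun i => affinePoly (v i) (A i)

theorem affineHom_X (A : Matrix σ σ R) (v : σ → R) (i : σ) :
    affineHom A v (X i) = affinePoly (v i) (A i) :=
  aeval_X _ _

theorem affineHom_comp_affineHom (A B : Matrix σ σ R) (v w : σ → R) :
    (affineHom A v).comp (affineHom B w) = affineHom (B * A) (w + B *ᵥ v) := by
  refine MvPolynomial.algHom_ext fun i => ?_
  rw [AlgHom.comp_apply, affineHom_X, affineHom_X, map_affinePoly _ (affineHom_X A v)]
  rfl

theorem affineHom_one_zero [DecidableEq σ] :
    affineHom (1 : Matrix σ σ R) 0 = AlgHom.id R (MvPolynomial σ R) := by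
  refine MvPolynomial.algHom_ext fun i => ?_
  simp [affineHom_X, affinePoly, Matrix.one_apply]

variable [DecidableEq σ]

/-- The affine automorphism `x ↦ v + A x`. -/
noncomputable def affineAut (A : GL σ R) (v : σ → R) : MvPolynomial σ R ≃ₐ[R] MvPolynomial σ R :=
  AlgEquiv.ofAlgHom (affineHom A.1 v) (affineHom (A⁻¹).1 (-((A⁻¹).1 *ᵥ v)))
    (by rw [affineHom_comp_affineHom, ← Units.val_mul, inv_mul_cancel, neg_add_cancel,
          Units.val_one, affineHom_one_zero])
    (by rw [affineHom_comp_affineHom, ← Units.val_mul, mul_inv_cancel, mulVec_neg, mulVec_mulVec,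
          ← Units.val_mul, mul_inv_cancel, Units.val_one, one_mulVec, add_neg_cancel,
          affineHom_one_zero])

theorem affineAut_X (A : GL σ R) (v : σ → R) (i : σ) :
    affineAut A v (X i) = affinePoly (v i) (A.1 i) :=
  affineHom_X _ _ _

theorem affineAut_injective :
    Function.Injective2 (affineAut : GL σ R → (σ → R) → MvPolynomial σ R ≃ₐ[R] _) := by
  intro A B v w h
  have hX : ∀ i, v i = w i ∧ A.1 i = B.1 i := fun i =>
    affinePoly_injective (by rw [← affineAut_X, h, affineAut_X])
  exact ⟨Units.ext (funext fun i => (hX i).2), funext fun i => (hX i).1⟩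

theorem det_ne_zero_of_forall_X_eq_affinePoly (φ : MvPolynomial σ K ≃ₐ[K] MvPolynomial σ K)
    {v : σ → K} {A : Matrix σ σ K} (hφ : ∀ i, φ (X i) = affinePoly (v i) (A i)) : A.det ≠ 0 := by
  intro hA
  obtain ⟨u, hu, huA⟩ := exists_vecMul_eq_zero_iff.2 hA
  have hmap := map_affinePoly (φ : MvPolynomial σ K →ₐ[K] MvPolynomial σ K) hφ
  have heq : φ (affinePoly 0 u) = φ (affinePoly (u ⬝ᵥ v) 0) :=
    (hmap _ _).trans (by rw [huA, zero_add]; exact ((hmap _ _).trans (by simp)).symm)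
  exact hu (affinePoly_injective (φ.injective heq)).2

theorem exists_eq_affineAut (φ : MvPolynomial σ K ≃ₐ[K] MvPolynomial σ K)
    (hφ : ∀ i, (φ (X i)).totalDegree ≤ 1) : ∃ A v, affineAut A v = φ := by
  choose v A hA using fun i => exists_eq_affinePoly (hφ i)
  refine ⟨GeneralLinearGroup.mkOfDetNeZero A (det_ne_zero_of_forall_X_eq_affinePoly φ hA), v,
    AlgEquiv.coe_toAlgHom_injective (MvPolynomial.algHom_ext fun i => ?_)⟩
  exact (affineAut_X _ _ i).trans (hA i).symm

theorem autsOfDegree_one_eq_range :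
    autsOfDegree K 1 =
      Set.range (Function.uncurry (affineAut : GL (Fin 2) K → (Fin 2 → K) → PlaneAut K)) := by
  ext φ
  constructor
  · intro hφ
    obtain ⟨A, v, h⟩ :=
      exists_eq_affineAut φ fun i => (totalDegree_eq_one_of_mem_autsOfDegree_one hφ i).le
    exact ⟨(A, v), h⟩
  · rintro ⟨⟨A, v⟩, rfl⟩
    have hle (i : Fin 2) : (affineAut A v (X i)).totalDegree ≤ 1 := by
      rw [affineAut_X]
      exact totalDegree_affinePoly_le _ _
    exact le_antisymm (max_le (hle 0) (hle 1)) (autDeg_pos _)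

variable (F : Type*) [Field F]

theorem finite_autsOfDegree_one [Finite F] : (autsOfDegree F 1).Finite := by
  rw [autsOfDegree_one_eq_range]
  exact Set.finite_range _

theorem ncard_autsOfDegree_one [Fintype F] : (autsOfDegree F 1).ncard =
    (Fintype.card F ^ 2 - 1) * (Fintype.card F ^ 2 - Fintype.card F) * Fintype.card F ^ 2 := by
  rw [autsOfDegree_one_eq_range, ← Set.image_univ,
    Set.ncard_image_of_injective _ affineAut_injective.uncurry, Set.ncard_univ, Nat.card_prod,
    Matrix.card_GL_field, Nat.card_fun, Nat.card_fin, Nat.card_eq_fintype_card, Fin.prod_univ_two]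
  simp

end Affine

section Factorizations

open ArithmeticFunction

theorem sum_divisors_mul_pow_cardFactors_le (x a b : ℕ) :
    ∑ d ∈ (a * b).divisors, x ^ cardFactors d ≤
      (∑ d ∈ a.divisors, x ^ cardFactors d) * ∑ d ∈ b.divisors, x ^ cardFactors d := by
  classical
  rw [Nat.divisors_mul, Finset.mul_def, Finset.sum_mul_sum, ← Finset.sum_product']
  refine (Finset.sum_image_le_of_nonneg fun _ _ => Nat.zero_le _).trans
    (Finset.sum_le_sum fun d hd => ?_)
  obtain ⟨hda, hdb⟩ := Finset.mem_product.1 hd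
  rw [cardFactors_mul (Nat.pos_of_mem_divisors hda).ne' (Nat.pos_of_mem_divisors hdb).ne', pow_add]

theorem sum_divisors_pow_cardFactors_le (x : ℕ) {n : ℕ} (hn : n ≠ 0) :
    ∑ d ∈ n.divisors, x ^ cardFactors d ≤ (x + 1) ^ cardFactors n := by
  induction n using induction_on_primes with
  | zero => exact absurd rfl hn
  | one => simp
  | prime_mul p a hp ih =>
    have ha : a ≠ 0 := right_ne_zero_of_mul hn
    have hsum : ∑ d ∈ p.divisors, x ^ cardFactors d = x + 1 := by
      rw [hp.sum_divisors, cardFactors_apply_prime hp, cardFactors_one, pow_one, pow_zero]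
    calc ∑ d ∈ (p * a).divisors, x ^ cardFactors d
        ≤ (x + 1) * ∑ d ∈ a.divisors, x ^ cardFactors d :=
          hsum ▸ sum_divisors_mul_pow_cardFactors_le x p a
      _ ≤ (x + 1) * (x + 1) ^ cardFactors a := Nat.mul_le_mul_left _ (ih ha)
      _ = (x + 1) ^ cardFactors (p * a) := by
          rw [cardFactors_mul hp.ne_zero ha, cardFactors_apply_prime hp, pow_add, pow_one]

theorem cardFactors_lt_of_mem_properDivisors {m n : ℕ} (hm : m ∈ n.properDivisors) :
    cardFactors m < cardFactors n := by
  obtain ⟨d, hd, rfl⟩ := (Nat.mem_properDivisors_iff_exists (by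
    rintro rfl
    simp at hm)).1 hm
  have hm0 : m ≠ 0 := (Nat.pos_of_mem_properDivisors hm).ne'
  rw [cardFactors_mul hm0 (by omega)]
  exact Nat.lt_add_of_pos_right (cardFactors_pos_iff_one_lt.2 hd)

theorem sum_properDivisors_cardFactors_pow_le {n : ℕ} (hn : 1 < n) :
    ∑ m ∈ n.properDivisors, cardFactors m ^ cardFactors m ≤ cardFactors n ^ cardFactors n :=
  calc ∑ m ∈ n.properDivisors, cardFactors m ^ cardFactors m
      ≤ ∑ m ∈ n.properDivisors, (cardFactors n - 1) ^ cardFactors m :=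
        Finset.sum_le_sum fun _ hm =>
          Nat.pow_le_pow_left (Nat.le_sub_one_of_lt (cardFactors_lt_of_mem_properDivisors hm)) _
    _ ≤ ∑ m ∈ n.divisors, (cardFactors n - 1) ^ cardFactors m :=
        Finset.sum_le_sum_of_subset Nat.properDivisors_subset_divisors
    _ ≤ (cardFactors n - 1 + 1) ^ cardFactors n := sum_divisors_pow_cardFactors_le _ (by omega)
    _ = cardFactors n ^ cardFactors n := by
        rw [Nat.sub_add_cancel (cardFactors_pos_iff_one_lt.2 hn)]

theorem cardFactors_le_log_two {n : ℕ} (hn : n ≠ 0) : cardFactors n ≤ Nat.log 2 n := by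
  refine Nat.le_log_of_pow_le one_lt_two ?_
  rw [cardFactors_apply]
  calc 2 ^ n.primeFactorsList.length ≤ n.primeFactorsList.prod :=
        List.pow_card_le_prod _ 2 fun p hp => (Nat.prime_of_mem_primeFactorsList hp).two_le
    _ = n := Nat.prod_primeFactorsList hn

end Factorizations

section Estimates

open ArithmeticFunction

variable (F : Type*) [Field F]

theorem finite_autsOfDegree [Finite F] (n : ℕ) : (autsOfDegree F n).Finite := by
  induction n using Nat.strong_induction_on with
  | _ n ih =>
  rcases n with _ | _ | n
  · rw [autsOfDegree_zero]
    exact Set.finite_empty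
  · exact finite_autsOfDegree_one F
  · refine (Set.Finite.biUnion (Finset.finite_toSet _) fun m hm => ?_).subset
      (autsOfDegree_subset (by omega))
    exact (finite_decompositionData (ih m (Nat.mem_properDivisors.1 hm).2) _).image _

theorem ncard_autsOfDegree_le_sum [Finite F] {n : ℕ} (hn : 1 < n) :
    (autsOfDegree F n).ncard ≤ ∑ m ∈ n.properDivisors, (decompositionData F (n / m) m).ncard := by
  have hfin (m : ℕ) := finite_decompositionData (finite_autsOfDegree F m) (n / m)
  refine (Set.ncard_le_ncard (autsOfDegree_subset hn) ?_).trans ?_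
  · exact Set.Finite.biUnion (Finset.finite_toSet _) fun m _ => (hfin m).image _
  · exact (Finset.set_ncard_biUnion_le _ _).trans
      (Finset.sum_le_sum fun m _ => Set.ncard_image_le (hfin m))

theorem ncard_decompositionData_one_le [Finite F] {n : ℕ} (hn : 1 < n) :
    (decompositionData F n 1).ncard ≤ (autsOfDegree F n).ncard :=
  Set.ncard_le_ncard_of_injOn _ (mapsTo_compositeAut hn) (injOn_compositeAut hn)
    (finite_autsOfDegree F n)

variable [Fintype F]

theorem ncard_decompositionData_le {d : ℕ} (hd : 2 ≤ d) (m : ℕ) :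
    (decompositionData F d m).ncard ≤ Fintype.card F ^ d * (autsOfDegree F m).ncard := by
  rw [ncard_decompositionData F hd]
  refine Nat.mul_le_mul_right _ ?_
  generalize Fintype.card F = q
  calc (q + 1) * ((q - 1) * q ^ (d - 2)) = (q ^ 2 - 1 ^ 2) * q ^ (d - 2) := by
        rw [Nat.sq_sub_sq, mul_assoc]
    _ ≤ q ^ 2 * q ^ (d - 2) := Nat.mul_le_mul_right _ (Nat.sub_le _ _)
    _ = q ^ d := by rw [← pow_add, Nat.add_sub_cancel' hd]

theorem ncard_autsOfDegree_one_le : (autsOfDegree F 1).ncard ≤ Fintype.card F ^ 6 := by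
  rw [ncard_autsOfDegree_one]
  calc (Fintype.card F ^ 2 - 1) * (Fintype.card F ^ 2 - Fintype.card F) * Fintype.card F ^ 2
      ≤ Fintype.card F ^ 2 * Fintype.card F ^ 2 * Fintype.card F ^ 2 :=
        Nat.mul_le_mul_right _ (Nat.mul_le_mul (Nat.sub_le _ _) (Nat.sub_le _ _))
    _ = Fintype.card F ^ 6 := by ring

theorem ncard_autsOfDegree_le {n : ℕ} (hn : n ≠ 0) :
    (autsOfDegree F n).ncard ≤ cardFactors n ^ cardFactors n * Fintype.card F ^ (n + 6) := by
  have hq : 0 < Fintype.card F := Fintype.card_pos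
  induction n using Nat.strong_induction_on with
  | _ n ih =>
  obtain rfl | hn1 : n = 1 ∨ 1 < n := by omega
  · simpa using (ncard_autsOfDegree_one_le F).trans (Nat.pow_le_pow_right hq (by norm_num))
  refine (ncard_autsOfDegree_le_sum F hn1).trans (le_trans ?_
    (Nat.mul_le_mul_right _ (sum_properDivisors_cardFactors_pow_le hn1)))
  rw [Finset.sum_mul]
  refine Finset.sum_le_sum fun m hm => ?_
  obtain ⟨d, hd, rfl⟩ := (Nat.mem_properDivisors_iff_exists hn).1 hm
  have hm0 := Nat.pos_of_mem_properDivisors hm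
  rw [Nat.mul_div_cancel_left _ hm0]
  refine (ncard_decompositionData_le F hd m).trans ?_
  obtain rfl | hm1 : m = 1 ∨ 1 < m := by omega
  · rw [cardFactors_one, pow_zero, one_mul, one_mul, pow_add]
    exact Nat.mul_le_mul_left _ (ncard_autsOfDegree_one_le F)
  · calc Fintype.card F ^ d * (autsOfDegree F m).ncard
        ≤ Fintype.card F ^ d * (cardFactors m ^ cardFactors m * Fintype.card F ^ (m + 6)) :=
          Nat.mul_le_mul_left _ (ih m (Nat.mem_properDivisors.1 hm).2 hm0.ne')
      _ = cardFactors m ^ cardFactors m * Fintype.card F ^ (m + d + 6) := by ring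
      _ ≤ cardFactors m ^ cardFactors m * Fintype.card F ^ (m * d + 6) :=
          Nat.mul_le_mul_left _ (Nat.pow_le_pow_right hq
            (Nat.add_le_add_right (Nat.add_le_mul hm1 hd) 6))

theorem ncard_decompositionData_one {n : ℕ} (hn : 2 ≤ n) :
    ((decompositionData F n 1).ncard : ℝ) = ((Fintype.card F : ℝ) - 1) ^ 3 *
      ((Fintype.card F : ℝ) + 1) ^ 2 * (Fintype.card F : ℝ) ^ (n + 1) := by
  have hq : 1 ≤ Fintype.card F := Fintype.card_pos
  obtain ⟨k, rfl⟩ := Nat.exists_eq_add_of_le' hn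
  rw [ncard_decompositionData F hn, ncard_autsOfDegree_one, Nat.add_sub_cancel]
  push_cast [Nat.cast_sub hq, Nat.cast_sub (Nat.one_le_pow 2 _ hq),
    Nat.cast_sub (Nat.le_self_pow two_ne_zero (Fintype.card F))]
  ring

theorem ncard_decompositionData_div_le {m n : ℕ} (hm : m ∈ n.properDivisors) (hm1 : m ≠ 1) :
    ((decompositionData F (n / m) m).ncard : ℝ) ≤
      (cardFactors m ^ cardFactors m : ℕ) * (Fintype.card F : ℝ) ^ ((n : ℝ) / 2 + 8) := by
  have hm0 := Nat.pos_of_mem_properDivisors hm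
  obtain ⟨d, hd, rfl⟩ := (Nat.mem_properDivisors_iff_exists (by
    rintro rfl
    simp at hm)).1 hm
  rw [Nat.mul_div_cancel_left _ hm0]
  have hnat : (decompositionData F d m).ncard ≤
      cardFactors m ^ cardFactors m * Fintype.card F ^ (m + d + 6) :=
    ((ncard_decompositionData_le F hd m).trans
      (Nat.mul_le_mul_left _ (ncard_autsOfDegree_le F hm0.ne'))).trans_eq (by ring)
  refine (Nat.cast_le.2 hnat).trans ?_
  rw [Nat.cast_mul, Nat.cast_pow (Fintype.card F), ← Real.rpow_natCast]
  refine mul_le_mul_of_nonneg_left (Real.rpow_le_rpow_of_exponent_le ?_ ?_) (Nat.cast_nonneg _)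
  · exact_mod_cast (Fintype.card_pos : 0 < Fintype.card F)
  · have hm2 : (2 : ℝ) ≤ m := by exact_mod_cast (show 2 ≤ m by omega)
    have hd2 : (2 : ℝ) ≤ d := by exact_mod_cast hd
    push_cast
    nlinarith [mul_nonneg (sub_nonneg.2 hm2) (sub_nonneg.2 hd2)]

theorem sum_ncard_decompositionData_le {n : ℕ} (hn : 1 < n) :
    ((∑ m ∈ n.properDivisors.erase 1, (decompositionData F (n / m) m).ncard : ℕ) : ℝ) ≤
      (Nat.log 2 n : ℝ) ^ Nat.log 2 n * (Fintype.card F : ℝ) ^ ((n : ℝ) / 2 + 8) := by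
  have hlog : ∑ m ∈ n.properDivisors.erase 1, cardFactors m ^ cardFactors m ≤
      Nat.log 2 n ^ Nat.log 2 n :=
    ((Finset.sum_le_sum_of_subset (Finset.erase_subset _ _)).trans
      (sum_properDivisors_cardFactors_pow_le hn)).trans
      (Nat.pow_self_mono (cardFactors_le_log_two (by omega)))
  rw [Nat.cast_sum]
  refine (Finset.sum_le_sum fun m hm => ncard_decompositionData_div_le F
    (Finset.mem_of_mem_erase hm) (Finset.ne_of_mem_erase hm)).trans ?_
  rw [← Finset.sum_mul, ← Nat.cast_sum]
  exact mul_le_mul_of_nonneg_right (by exact_mod_cast hlog) (by positivity)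

end Estimates

/-- For `n ≥ 2`, the number `p_n` of automorphisms of `𝔽_q[x,y]` of degree `n` satisfies
`(q−1)³(q+1)²q^(n+1) ≤ p_n ≤ (q−1)³(q+1)²q^(n+1) + (log₂ n)^(log₂ n) q^(n/2+8)`. -/
theorem stmt_12 (F : Type*) [Field F] [Fintype F] (q : ℕ) (hq : q = Fintype.card F)
    (n : ℕ) (hn : 2 ≤ n) :
    (((q : ℝ) - 1) ^ 3 * ((q : ℝ) + 1) ^ 2 * (q : ℝ) ^ (n + 1)
        ≤ (Nat.card {φ : MvPolynomial (Fin 2) F ≃ₐ[F] MvPolynomial (Fin 2) F // autDeg φ = n} : ℝ)) ∧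
    ((Nat.card {φ : MvPolynomial (Fin 2) F ≃ₐ[F] MvPolynomial (Fin 2) F // autDeg φ = n} : ℝ)
        ≤ ((q : ℝ) - 1) ^ 3 * ((q : ℝ) + 1) ^ 2 * (q : ℝ) ^ (n + 1)
          + (Nat.log 2 n : ℝ) ^ (Nat.log 2 n) * (q : ℝ) ^ ((n : ℝ) / 2 + 8)) := by
  subst hq
  have hcard : Nat.card {φ : PlaneAut F // autDeg φ = n} = (autsOfDegree F n).ncard :=
    Nat.card_coe_set_eq _
  rw [hcard, ← ncard_decompositionData_one F hn]
  refine ⟨Nat.cast_le.2 (ncard_decompositionData_one_le F hn), ?_⟩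
  refine le_trans ?_ (add_le_add_right (sum_ncard_decompositionData_le F hn) _)
  have hone : 1 ∈ n.properDivisors := Nat.one_mem_properDivisors_iff_one_lt.2 hn
  have hle := ncard_autsOfDegree_le_sum F hn
  rw [← Finset.add_sum_erase _ _ hone, Nat.div_one] at hle
  exact_mod_cast hle
end

section
/- In the free Lie algebra on two generators x, y over a field, every homogeneous element of degree n ≥ 2 lying in the subalgebra generated by a single element of degree 1 is zero; consequently, every automorphism of the free Lie algebra of rank 2 defined over a field is linear (degree 1). -/
/-!
Adjoin `u` as the greatest element of a basis of a Lie algebra `L`. Straightening words into weakly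
increasing ones is confluent (the diamond lemma; the overlaps resolve by the Jacobi identity), so a
functional on the increasing words extends to `U(L)`. If it vanishes on the words ending in `u`,
then so does its extension on the left ideal `U(L) u`; hence `L ∩ U(L) u = K u`.

Let now `u, v` generate the free Lie algebra, with `deg u ≤ deg v` and `1 < deg v`, inside the free
associative algebra, which is its enveloping algebra. Some generator is not a left multiple of `u`,
but it is of the form `p u + q v`, a cancellation of degrees. By Cohn's weak algorithm the leading
form of `v` is then a left multiple of that of `u`. Both are Lie elements, so it is a scalar
multiple, and subtracting the same multiple of `u` from `v` lowers the degree. Repeating this shows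
that `u` and `v` are combinations of elements of degree one.
-/

theorem freeAlgebraBasisFreeMonoid_apply {R X : Type*} [CommSemiring R] (w : FreeMonoid X) :
    FreeAlgebra.basisFreeMonoid R X w = FreeMonoid.lift (FreeAlgebra.ι R) w := by
  rw [FreeAlgebra.basisFreeMonoid, Module.Basis.map_apply]
  simp [FreeAlgebra.equivMonoidAlgebraFreeMonoid]

namespace PBW

open Module

section Relator

variable {R L : Type*} [CommRing R] [LieRing L] [LieAlgebra R L]

local notation "ι" => TensorAlgebra.ι R (M := L)

/-- The defining relators `x y - y x - ⁅x, y⁆` of the universal enveloping algebra, as elements of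
the tensor algebra. -/
noncomputable def relator : L →ₗ[R] L →ₗ[R] TensorAlgebra R L :=
  LinearMap.mk₂ R (fun x y => ι x * ι y - ι y * ι x - ι ⁅x, y⁆)
    (fun x x' y => by simp only [map_add, add_lie, add_mul, mul_add]; abel)
    (fun r x y => by
      simp only [map_smul, smul_lie, smul_mul_assoc, mul_smul_comm, smul_sub])
    (fun x y y' => by simp only [map_add, lie_add, add_mul, mul_add]; abel)
    (fun r x y => by
      simp only [map_smul, lie_smul, smul_mul_assoc, mul_smul_comm, smul_sub])

theorem relator_apply (x y : L) : relator x y = ι x * ι y - ι y * ι x - ι ⁅x, y⁆ :=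
  rfl

theorem relator_self (x : L) : relator (R := R) x x = 0 := by
  simp [relator_apply]

theorem relator_swap (x y : L) : relator (R := R) y x = -relator x y := by
  rw [relator_apply, relator_apply, ← lie_skew x y, map_neg]
  abel

theorem relator_jacobi (x y z : L) :
    relator x y * ι z - ι z * relator x y + relator ⁅x, y⁆ z +
      (relator y z * ι x - ι x * relator y z + relator ⁅y, z⁆ x) +
      (relator z x * ι y - ι y * relator z x + relator ⁅z, x⁆ y) = 0 := by
  have jacobi : ι ⁅⁅x, y⁆, z⁆ + ι ⁅⁅y, z⁆, x⁆ + ι ⁅⁅z, x⁆, y⁆ = 0 := by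
    rw [← map_add, ← map_add, ← lie_skew ⁅x, y⁆ z, ← lie_skew ⁅y, z⁆ x, ← lie_skew ⁅z, x⁆ y,
      ← neg_add, ← neg_add, lie_jacobi, neg_zero, map_zero]
  rw [← neg_eq_zero, ← jacobi]
  simp only [relator_apply, mul_sub, sub_mul, mul_assoc]
  abel

end Relator

section Word

variable {I : Type*}

/-- A descent of a word `w`: two adjacent letters `high`, `low` in the wrong order, together with
the parts of `w` before and after them. -/
structure Descent [LinearOrder I] (w : List I) where
  (pre : List I) (high low : I) (post : List I)
  lt : low < high
  eq : w = pre ++ high :: low :: post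

/-- The number of pairs of letters of a word that are in the wrong order. -/
def inversions [LinearOrder I] : List I → ℕ
  | [] => 0
  | a :: w => w.countP (· < a) + inversions w

theorem inversions_swap_lt [LinearOrder I] (s t : List I) {i j : I} (h : i < j) :
    inversions (s ++ i :: j :: t) < inversions (s ++ j :: i :: t) := by
  induction s with
  | nil =>
    simp only [List.nil_append, inversions, List.countP_cons, h, h.not_gt, decide_true,
      decide_false, if_true, Bool.false_eq_true, if_false]
    omega
  | cons a s ih =>
    simp only [List.cons_append, inversions, List.countP_append, List.countP_cons]
    omega

namespace Descent

variable [LinearOrder I] {w : List I} (d : Descent w)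

/-- The word obtained by exchanging the two letters of a descent. -/
def swap : List I :=
  d.pre ++ d.low :: d.high :: d.post

theorem length_swap : d.swap.length = w.length := by
  have := congrArg List.length d.eq
  simpa [swap] using this.symm

theorem length_append_cons_lt (k : I) : (d.pre ++ k :: d.post).length < w.length := by
  have := congrArg List.length d.eq
  simp only [List.length_append, List.length_cons] at this ⊢
  omega

theorem inversions_swap_lt : inversions d.swap < inversions w :=
  (PBW.inversions_swap_lt _ _ d.lt).trans_eq (congrArg inversions d.eq.symm)

theorem singleton_suffix_post {i₀ : I} (top : ∀ i, i ≤ i₀) (hw : [i₀] <:+ w) :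
    [i₀] <:+ d.post := by
  have post_ne_nil : d.post ≠ [] := fun hpost => by
    have hlow : [d.low] <:+ w := ⟨d.pre ++ [d.high], by simpa [hpost] using d.eq.symm⟩
    have low_eq : d.low = i₀ := by
      simpa using (List.suffix_of_suffix_length_le hlow hw le_rfl).eq_of_length rfl
    exact (low_eq ▸ d.lt).not_ge (top d.high)
  refine List.suffix_of_suffix_length_le hw ⟨d.pre ++ [d.high, d.low], by simp [← d.eq]⟩ ?_
  simpa [Nat.succ_le_iff, List.length_pos_iff] using post_ne_nil

end Descent

theorem length_inversions_induction [LinearOrder I] {P : List I → Prop}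
    (step : ∀ w : List I, (∀ w' : List I, w'.length < w.length → P w') →
      (∀ w' : List I, w'.length = w.length → inversions w' < inversions w → P w') → P w)
    (w : List I) : P w := by
  induction h : toLex (w.length, inversions w) using WellFoundedLT.induction generalizing w with
  | ind p ih =>
    subst h
    exact step w (fun w' hw' => ih _ (Prod.Lex.left _ _ hw') w' rfl)
      fun w' hl hi => ih _ (Prod.Lex.toLex_lt_toLex.mpr (.inr ⟨hl, hi⟩)) w' rfl

section Monomial

variable {R V : Type*} [CommSemiring R] [AddCommMonoid V] [Module R V] (b : Basis I R V)

/-- The monomial of the tensor algebra spelled by a word in the indices of a basis. -/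
noncomputable def monomial (w : List I) : TensorAlgebra R V :=
  (w.map fun i => TensorAlgebra.ι R (b i)).prod

theorem monomial_append (s t : List I) : monomial b (s ++ t) = monomial b s * monomial b t := by
  simp [monomial]

theorem monomial_cons (i : I) (t : List I) :
    monomial b (i :: t) = TensorAlgebra.ι R (b i) * monomial b t := by
  simp [monomial]

theorem monomial_nil : monomial b [] = 1 := by
  simp [monomial]

theorem tensorAlgebra_apply (w : FreeMonoid I) : b.tensorAlgebra w = monomial b w.toList := by
  simp [Basis.tensorAlgebra, monomial, freeAlgebraBasisFreeMonoid_apply, FreeMonoid.lift_apply,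
    map_list_prod, Function.comp_def]

variable {b} {M : Type*} [AddCommMonoid M] [Module R M] {f : TensorAlgebra R V →ₗ[R] M}

theorem map_mul_ι_mul_eq_zero {a c : TensorAlgebra R V}
    (h : ∀ k, f (a * TensorAlgebra.ι R (b k) * c) = 0) (x : V) :
    f (a * TensorAlgebra.ι R x * c) = 0 :=
  LinearMap.congr_fun (f := f ∘ₗ LinearMap.mulLeftRight R (a, c) ∘ₗ TensorAlgebra.ι R) (g := 0)
    (b.ext h) x

end Monomial

variable {R L M : Type*} [CommRing R] [LieRing L] [LieAlgebra R L] [AddCommGroup M] [Module R M]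
  {b : Basis I R L} {f : TensorAlgebra R L →ₗ[R] M}

local notation "ι" => TensorAlgebra.ι R (M := L)

variable [LinearOrder I]

theorem map_mul_relator_mul_eq_zero {a c : TensorAlgebra R L}
    (h : ∀ i j, i < j → f (a * relator (b j) (b i) * c) = 0) (x y : L) :
    f (a * relator x y * c) = 0 := by
  refine LinearMap.congr_fun₂ (f := relator.compr₂ (f ∘ₗ LinearMap.mulLeftRight R (a, c)))
    (g := 0) (b.ext fun i => b.ext fun j => ?_) x y
  change f (a * relator (b i) (b j) * c) = 0
  rcases lt_trichotomy i j with hij | rfl | hij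
  · rw [relator_swap, mul_neg, neg_mul, map_neg, h i j hij, neg_zero]
  · rw [relator_self, mul_zero, zero_mul, map_zero]
  · exact h j i hij

variable (b) in
/-- The relator that rewrites a word at one of its descents, multiplied by the rest of the word. -/
noncomputable def Descent.relation {w : List I} (d : Descent w) : TensorAlgebra R L :=
  monomial b d.pre * relator (b d.high) (b d.low) * monomial b d.post

theorem Descent.relation_eq {w : List I} (d : Descent w) :
    d.relation b = monomial b w - monomial b d.swap -
      monomial b d.pre * ι ⁅b d.high, b d.low⁆ * monomial b d.post := by
  conv_rhs => enter [1, 1, 2]; rw [d.eq]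
  simp only [Descent.relation, Descent.swap, relator_apply, monomial_append, monomial_cons, mul_sub,
    sub_mul, mul_assoc]

variable (b f) in
/-- `f` kills the relations that rewrite `w` at one of its descents. -/
def RespectsDescents (w : List I) : Prop :=
  ∀ d : Descent w, f (d.relation b) = 0

theorem RespectsDescents.eq_zero {w s t : List I} {i j : I} (h : RespectsDescents b f w)
    (hw : w = s ++ j :: i :: t) (hij : i < j) :
    f (monomial b s * relator (b j) (b i) * monomial b t) = 0 :=
  h ⟨s, j, i, t, hij, hw⟩

theorem map_monomial_mul_relator_mul_monomial_eq_zero {n : ℕ}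
    (short : ∀ w : List I, w.length < n → RespectsDescents b f w) {s t : List I}
    (h : s.length + t.length + 2 < n) (x y : L) :
    f (monomial b s * relator x y * monomial b t) = 0 :=
  map_mul_relator_mul_eq_zero (fun i j hij =>
    (short (s ++ j :: i :: t) (by simp only [List.length_append, List.length_cons]; omega)).eq_zero
      rfl hij) x y

section Confluence

variable {w : List I} (short : ∀ w' : List I, w'.length < w.length → RespectsDescents b f w')
  (sorter : ∀ w' : List I, w'.length = w.length → inversions w' < inversions w →
    RespectsDescents b f w')

include short sorter

theorem map_eq_map_of_overlapping_descents {s t : List I} {i j k : I}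
    (hw : w = s ++ k :: j :: i :: t) (hij : i < j) (hjk : j < k) :
    f (monomial b s * relator (b k) (b j) * monomial b (i :: t)) =
      f (monomial b (s ++ [k]) * relator (b j) (b i) * monomial b t) := by
  subst hw
  have hik := hij.trans hjk
  have jki := inversions_swap_lt s (i :: t) hjk
  have jik := inversions_swap_lt (s ++ [j]) t hik
  have kij := inversions_swap_lt (s ++ [k]) t hij
  have ikj := inversions_swap_lt s (j :: t) hik
  simp only [List.append_assoc, List.cons_append, List.nil_append] at jki jik kij ikj
  have r_jki := (sorter _ (by simp) jki).eq_zero (s := s ++ [j]) (t := t) (by simp) hik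
  have r_jik := (sorter _ (by simp) (jik.trans jki)).eq_zero rfl hij
  have r_kij := (sorter _ (by simp) kij).eq_zero rfl hik
  have r_ikj := (sorter _ (by simp) (ikj.trans kij)).eq_zero (s := s ++ [i]) (t := t) (by simp)
    hjk
  have r_short (x y : L) := map_monomial_mul_relator_mul_monomial_eq_zero short (s := s) (t := t)
    (by simp only [List.length_append, List.length_cons]; omega) x y
  -- All but two terms of this expansion vanish, by `short` or `sorter`.
  have jacobi := congrArg (fun a => f (monomial b s * a * monomial b t))
    (relator_jacobi (b k) (b j) (b i))
  rw [relator_swap (b k) (b i)] at jacobi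
  simp only [monomial_append, monomial_cons, monomial_nil, mul_one, mul_add, add_mul, mul_sub,
    sub_mul, map_add, map_sub, mul_zero, zero_mul, map_zero, mul_assoc, mul_neg, neg_mul,
    map_neg] at *
  rw [r_jki, r_jik, r_kij, r_ikj, r_short, r_short, r_short] at jacobi
  rw [← sub_eq_zero, ← jacobi]
  abel

theorem map_eq_map_of_disjoint_descents {s m t : List I} {i j i' j' : I}
    (hw : w = s ++ j :: i :: (m ++ j' :: i' :: t)) (hij : i < j) (hij' : i' < j') :
    f (monomial b s * relator (b j) (b i) * monomial b (m ++ j' :: i' :: t)) =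
      f (monomial b (s ++ j :: i :: m) * relator (b j') (b i') * monomial b t) := by
  subst hw
  set r := relator (R := R) (b j) (b i)
  set r' := relator (R := R) (b j') (b i')
  have iijj := inversions_swap_lt s (m ++ j' :: i' :: t) hij
  have jjii := inversions_swap_lt (s ++ j :: i :: m) t hij'
  simp only [List.append_assoc, List.cons_append] at iijj jjii
  have r'_sorted := (sorter _ (by simp) iijj).eq_zero (s := s ++ i :: j :: m) (t := t) (by simp)
    hij'
  have r_sorted := (sorter _ (by simp) jjii).eq_zero rfl hij
  have r'_short : f (monomial b s * ι ⁅b j, b i⁆ * (monomial b m * r' * monomial b t)) = 0 :=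
    map_mul_ι_mul_eq_zero (b := b) (fun k => by
      have := map_monomial_mul_relator_mul_monomial_eq_zero short (s := s ++ k :: m) (t := t)
        (by simp only [List.length_append, List.length_cons]; omega) (b j') (b i')
      simpa only [monomial_append, monomial_cons, mul_assoc] using this) _
  have r_short : f (monomial b s * r * monomial b m * ι ⁅b j', b i'⁆ * monomial b t) = 0 :=
    map_mul_ι_mul_eq_zero (b := b) (fun k => by
      have := map_monomial_mul_relator_mul_monomial_eq_zero short (s := s) (t := m ++ k :: t)
        (by simp only [List.length_append, List.length_cons]; omega) (b j) (b i)
      simpa only [monomial_append, monomial_cons, mul_assoc] using this) _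
  -- Expanding either the right or the left factor of `r * m * r'` yields the two sides.
  have expand : r * monomial b m * (ι (b j') * ι (b i') - ι (b i') * ι (b j') - ι ⁅b j', b i'⁆)
      = (ι (b j) * ι (b i) - ι (b i) * ι (b j) - ι ⁅b j, b i⁆) * monomial b m * r' := by
    rw [← relator_apply, ← relator_apply]
  replace expand := congrArg (fun a => f (monomial b s * a * monomial b t)) expand
  simp only [monomial_append, monomial_cons, mul_sub, sub_mul, map_sub, mul_assoc] at *
  rw [r'_sorted, r_sorted, r'_short, r_short] at expand
  simpa only [sub_zero] using expand

theorem map_relation_eq_map_relation (d d' : Descent w) :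
    f (d.relation b) = f (d'.relation b) := by
  wlog h : d.pre.length ≤ d'.pre.length generalizing d d'
  · exact (this d' d (le_of_not_ge h)).symm
  obtain ⟨s, j, i, t, hij, hw⟩ := d
  obtain ⟨s', j', i', t', hij', hw'⟩ := d'
  obtain ⟨m, rfl⟩ : s <+: s' := List.prefix_of_prefix_length_le ⟨_, hw.symm⟩ ⟨_, hw'.symm⟩ h
  have htail : j :: i :: t = m ++ j' :: i' :: t' := by
    simpa only [hw, List.append_assoc, List.append_cancel_left_eq] using hw'
  match m, htail with
  | [], htail =>
    obtain ⟨rfl, rfl, rfl⟩ : j = j' ∧ i = i' ∧ t = t' := by simpa using htail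
    simp only [Descent.relation, List.append_nil]
  | [_], htail =>
    obtain ⟨rfl, rfl, rfl⟩ : j = _ ∧ i = j' ∧ t = i' :: t' := by simpa using htail
    exact map_eq_map_of_overlapping_descents short sorter hw hij' hij
  | _ :: _ :: m, htail =>
    obtain ⟨rfl, rfl, rfl⟩ : j = _ ∧ i = _ ∧ t = m ++ j' :: i' :: t' := by simpa using htail
    exact map_eq_map_of_disjoint_descents short sorter hw hij hij'

end Confluence

section NormalForm

variable (b) (g : List I → M)

open Classical in
/-- The value on a word of the functional extending `g` from the weakly increasing words: each
descent `j i` is rewritten as `i j + ⁅b j, b i⁆`. -/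
noncomputable def straighten (w : List I) : M :=
  if h : Nonempty (Descent w) then
    straighten h.some.swap + (b.repr ⁅b h.some.high, b h.some.low⁆).sum fun k r =>
      r • straighten (h.some.pre ++ k :: h.some.post)
  else g w
termination_by (w.length, inversions w)
decreasing_by
  · exact Prod.lex_def.mpr (.inr ⟨h.some.length_swap, h.some.inversions_swap_lt⟩)
  · exact Prod.Lex.left _ _ (h.some.length_append_cons_lt _)

/-- The functional on the tensor algebra that kills the relators and has values `g` on the weakly
increasing monomials. -/
noncomputable def normalForm : TensorAlgebra R L →ₗ[R] M :=
  b.tensorAlgebra.constr R fun w => straighten b g w.toList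

theorem normalForm_monomial (w : List I) : normalForm b g (monomial b w) = straighten b g w := by
  rw [normalForm, ← FreeMonoid.toList_ofList w, ← tensorAlgebra_apply, Basis.constr_basis]

theorem normalForm_monomial_of_isEmpty {w : List I} (hw : IsEmpty (Descent w)) :
    normalForm b g (monomial b w) = g w := by
  rw [normalForm_monomial, straighten, dif_neg (not_nonempty_iff.mpr hw)]

theorem exists_descent_normalForm_relation {w : List I} (hw : Nonempty (Descent w)) :
    ∃ d : Descent w, normalForm b g (d.relation b) = 0 := by
  refine ⟨hw.some, ?_⟩
  set d := hw.some
  have normalForm_lie : normalForm b g (monomial b d.pre * ι ⁅b d.high, b d.low⁆ *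
      monomial b d.post) = (b.repr ⁅b d.high, b d.low⁆).sum fun k r =>
        r • straighten b g (d.pre ++ k :: d.post) := by
    conv_lhs => rw [← b.linearCombination_repr ⁅b d.high, b d.low⁆]
    simp only [Finsupp.linearCombination_apply, map_smul, Finsupp.sum,
      Finset.mul_sum, Finset.sum_mul, map_sum, mul_smul_comm, smul_mul_assoc,
      ← normalForm_monomial, monomial_append, monomial_cons, mul_assoc]
  have straighten_eq : straighten b g w = straighten b g d.swap +
      (b.repr ⁅b d.high, b d.low⁆).sum fun k r => r • straighten b g (d.pre ++ k :: d.post) := by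
    rw [straighten, dif_pos hw]
  rw [d.relation_eq, map_sub, map_sub, normalForm_monomial, normalForm_monomial, straighten_eq,
    normalForm_lie]
  abel

theorem respectsDescents_normalForm (w : List I) : RespectsDescents b (normalForm b g) w := by
  induction w using length_inversions_induction with
  | step w short sorter =>
    intro d
    obtain ⟨d', hd'⟩ := exists_descent_normalForm_relation b g ⟨d⟩
    rw [map_relation_eq_map_relation short sorter d d', hd']

theorem normalForm_mul_relator_mul (a c : TensorAlgebra R L) (x y : L) :
    normalForm b g (a * relator x y * c) = 0 := by
  refine map_mul_relator_mul_eq_zero (b := b) (fun i j hij => ?_) x y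
  refine LinearMap.congr_fun₂ (f := (LinearMap.mul R _).compr₂ (normalForm b g) ∘ₗ
    LinearMap.mulRight R (relator (b j) (b i))) (g := 0)
    (b.tensorAlgebra.ext fun s => b.tensorAlgebra.ext fun t => ?_) a c
  rw [tensorAlgebra_apply, tensorAlgebra_apply]
  exact (respectsDescents_normalForm b g _).eq_zero rfl hij

theorem normalForm_ι (x : L) : normalForm b g (ι x) = b.constr R (fun i => g [i]) x := by
  refine LinearMap.congr_fun (f := normalForm b g ∘ₗ ι) (b.ext fun i => ?_) x
  have : IsEmpty (Descent [i]) :=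
    ⟨fun d => by have := congrArg List.length d.eq; simp at this; omega⟩
  simpa [monomial] using normalForm_monomial_of_isEmpty b g this

theorem normalForm_mul_ι_top {i₀ : I} (top : ∀ i, i ≤ i₀) (hg : ∀ w, [i₀] <:+ w → g w = 0)
    (a : TensorAlgebra R L) : normalForm b g (a * ι (b i₀)) = 0 := by
  suffices h : ∀ w, [i₀] <:+ w → normalForm b g (monomial b w) = 0 by
    refine LinearMap.congr_fun (f := normalForm b g ∘ₗ LinearMap.mulRight R (ι (b i₀))) (g := 0)
      (b.tensorAlgebra.ext fun w => ?_) a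
    simpa [tensorAlgebra_apply, monomial_append, monomial_cons, monomial_nil] using
      h _ (List.suffix_append w.toList [i₀])
  intro w
  induction w using length_inversions_induction with
  | step w short sorter =>
    intro hw
    rcases isEmpty_or_nonempty (Descent w) with h | ⟨⟨d⟩⟩
    · rw [normalForm_monomial_of_isEmpty b g h, hg w hw]
    have suffix (s : List I) : [i₀] <:+ s ++ d.post :=
      (d.singleton_suffix_post top hw).trans (List.suffix_append _ _)
    have swap := sorter d.swap d.length_swap d.inversions_swap_lt
      (by simpa [Descent.swap] using suffix (d.pre ++ [d.low, d.high]))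
    have lie := map_mul_ι_mul_eq_zero (f := normalForm b g) (b := b) (a := monomial b d.pre)
      (c := monomial b d.post) (x := ⁅b d.high, b d.low⁆) fun k => by
        have := short _ (d.length_append_cons_lt k) (by simpa using suffix (d.pre ++ [k]))
        simpa only [monomial_append, monomial_cons, mul_assoc] using this
    simpa [d.relation_eq, swap, lie] using respectsDescents_normalForm b g w d

theorem normalForm_single_ι [DecidableEq I] (i : I) (x : L) :
    normalForm b (Pi.single [i] (1 : R)) (ι x) = b.repr x i := by
  rw [normalForm_ι]
  refine LinearMap.congr_fun (g := b.coord i) (b.ext fun j => ?_) x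
  simp [Pi.single_apply, Finsupp.single_apply]

end NormalForm

end Word

/-- The syntactic congruence of a functional: two elements are related when `f` cannot tell them
apart in any context. -/
def syntacticCon {A M : Type*} [Semiring A] [AddCommMonoid M] (f : A →+ M) : RingCon A where
  r a a' := ∀ c d, f (c * a * d) = f (c * a' * d)
  iseqv := ⟨fun _ _ _ => rfl, fun h c d => (h c d).symm, fun h h' c d => (h c d).trans (h' c d)⟩
  add' h h' c d := by simp only [mul_add, add_mul, map_add, h c d, h' c d]
  mul' {a a' e e'} h h' c d := by
    have := (h c (e * d)).trans (by simpa only [mul_assoc] using h' (c * a') d)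
    simpa only [mul_assoc] using this

section UniversalEnvelopingAlgebra

open UniversalEnvelopingAlgebra

attribute [local instance] LieRing.ofAssociativeRing

variable {R L M : Type*} [CommRing R] [LieRing L] [LieAlgebra R L] [AddCommGroup M] [Module R M]

theorem map_eq_map_of_mkAlgHom_eq {f : TensorAlgebra R L →ₗ[R] M}
    (hf : ∀ a c x y, f (a * relator x y * c) = 0) {a a' : TensorAlgebra R L}
    (h : mkAlgHom R L a = mkAlgHom R L a') : f a = f a' := by
  let con := syntacticCon f.toAddMonoidHom
  let π : TensorAlgebra R L →ₐ[R] con.Quotient := RingCon.mkₐ R con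
  let ρ : L →ₗ⁅R⁆ con.Quotient :=
    { π.toLinearMap ∘ₗ TensorAlgebra.ι R with
      map_lie' := fun {x y} => by
        change π _ = ⁅π _, π _⁆
        rw [LieRing.of_associative_ring_bracket, ← map_mul π, ← map_mul π, ← map_sub]
        refine (RingCon.eq _).mpr fun c d => ?_
        have := hf c d x y
        rw [relator_apply, mul_sub, sub_mul, map_sub, sub_eq_zero] at this
        exact this.symm }
  have lift_comp : (UniversalEnvelopingAlgebra.lift R ρ).comp (mkAlgHom R L) = π :=
    TensorAlgebra.hom_ext (LinearMap.ext fun x => lift_ι_apply' R ρ x)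
  have hπ : π a = π a' := by rw [← lift_comp, AlgHom.comp_apply, AlgHom.comp_apply, h]
  have f_eq : f (1 * a * 1) = f (1 * a' * 1) := (RingCon.eq con).mp hπ 1 1
  simpa only [one_mul, mul_one] using f_eq

theorem ι_injective [Module.Free R L] :
    Function.Injective (UniversalEnvelopingAlgebra.ι R : L → UniversalEnvelopingAlgebra R L) := by
  classical
  let b := Module.Free.chooseBasis R L
  let _ : LinearOrder (Module.Free.ChooseBasisIndex R L) := linearOrderOfSTO WellOrderingRel
  intro x y hxy
  refine b.ext_elem fun i => ?_
  rw [← normalForm_single_ι, ← normalForm_single_ι]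
  exact map_eq_map_of_mkAlgHom_eq (normalForm_mul_relator_mul b _) hxy

theorem exists_linearOrder_forall_le {J : Type*} (j₀ : J) : ∃ _ : LinearOrder J, ∀ j, j ≤ j₀ := by
  classical
  let _ : LinearOrder J := linearOrderOfSTO WellOrderingRel
  let key (j : J) : Prop ×ₗ J := toLex (j = j₀, j)
  refine ⟨LinearOrder.lift' key fun j j' h => congrArg Prod.snd h, fun j => ?_⟩
  exact Prod.Lex.toLex_le_toLex'.mpr ⟨fun _ => rfl, fun h => (show j = j₀ from h.mpr rfl).le⟩

theorem exists_smul_basis_eq_of_ι_eq_mul_ι {I : Type*} (b : Basis I R L) (i₀ : I) {x : L}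
    {q : UniversalEnvelopingAlgebra R L}
    (h : UniversalEnvelopingAlgebra.ι R x = q * UniversalEnvelopingAlgebra.ι R (b i₀)) :
    ∃ c : R, x = c • b i₀ := by
  classical
  obtain ⟨_, top⟩ := exists_linearOrder_forall_le i₀
  obtain ⟨a, rfl⟩ : ∃ a, mkAlgHom R L a = q := RingCon.mkₐ_surjective (α := R) _ q
  refine ⟨b.repr x i₀, b.ext_elem fun i => ?_⟩
  rcases eq_or_ne i i₀ with rfl | hi
  · simp
  have h' : mkAlgHom R L (TensorAlgebra.ι R x) = mkAlgHom R L (a * TensorAlgebra.ι R (b i₀)) := by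
    rw [map_mul]
    exact h
  have hg : ∀ w, [i₀] <:+ w → (Pi.single [i] 1 : List I → R) w = 0 := fun w hw =>
    Pi.single_eq_of_ne (fun hwi => hi (List.singleton_inj.mp
      ((hwi ▸ hw).eq_of_length rfl)).symm) _
  rw [← normalForm_single_ι, map_eq_map_of_mkAlgHom_eq (normalForm_mul_relator_mul b _) h',
    normalForm_mul_ι_top b _ top hg]
  simp [hi.symm]

variable {K L : Type*} [Field K] [LieRing L] [LieAlgebra K L]

theorem exists_smul_eq_of_ι_eq_mul_ι {x u : L} {q : UniversalEnvelopingAlgebra K L}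
    (h : UniversalEnvelopingAlgebra.ι K x = q * UniversalEnvelopingAlgebra.ι K u) :
    ∃ c : K, x = c • u := by
  rcases eq_or_ne u 0 with rfl | hu
  · rw [map_zero, mul_zero, ← map_zero (UniversalEnvelopingAlgebra.ι K : L →ₗ⁅K⁆ _)] at h
    exact ⟨0, (ι_injective h).trans (zero_smul K _).symm⟩
  have hli : LinearIndepOn K id ({u} : Set L) := LinearIndepOn.singleton hu
  have hb : Basis.extend hli ⟨u, hli.subset_extend _ rfl⟩ = u := Basis.extend_apply_self hli _
  rw [← hb] at h ⊢
  exact exists_smul_basis_eq_of_ι_eq_mul_ι _ _ h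

end UniversalEnvelopingAlgebra
end PBW

namespace WeakAlgorithm

open FreeAlgebra Module

open Polynomial hiding degree degree_zero degree_mul degree_sub_lt

section LeftDeriv

variable {R X : Type*} [CommSemiring R]

theorem left_induction {P : FreeAlgebra R X → Prop} (algebraMap : ∀ r, P (algebraMap R _ r))
    (ι_mul : ∀ i a, P a → P (ι R i * a)) (add : ∀ a c, P a → P c → P (a + c))
    (a : FreeAlgebra R X) : P a := by
  have word (r : R) (w : FreeMonoid X) : P (r • basisFreeMonoid R X w) := by
    induction w using FreeMonoid.inductionOn' with
    | one => simpa [freeAlgebraBasisFreeMonoid_apply, Algebra.smul_def] using algebraMap r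
    | of_mul i w ih => simpa [freeAlgebraBasisFreeMonoid_apply] using ι_mul i _ ih
  obtain ⟨f, rfl⟩ := (basisFreeMonoid R X).repr.symm.surjective a
  induction f using Finsupp.induction_linear with
  | zero => simpa using word 0 1
  | add f g hf hg => simpa using add _ _ hf hg
  | single w r => simpa using word r w

/-- The coefficients `leftDeriv a i` in the unique expansion `a = r + ∑ i, x i * leftDeriv a i`
with a scalar `r`. -/
noncomputable def leftDeriv : FreeAlgebra R X →ₗ[R] X →₀ FreeAlgebra R X :=
  (basisFreeMonoid R X).constr R fun w => match w.toList with
    | [] => 0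
    | i :: t => Finsupp.single i (basisFreeMonoid R X (FreeMonoid.ofList t))

@[simp]
theorem leftDeriv_algebraMap (r : R) : leftDeriv (algebraMap R (FreeAlgebra R X) r) = 0 := by
  have one : (1 : FreeAlgebra R X) = basisFreeMonoid R X 1 := by
    simp [freeAlgebraBasisFreeMonoid_apply]
  rw [Algebra.algebraMap_eq_smul_one, one, map_smul, leftDeriv, Basis.constr_basis]
  exact smul_zero r

@[simp]
theorem leftDeriv_ι_mul (i : X) (a : FreeAlgebra R X) :
    leftDeriv (ι R i * a) = Finsupp.single i a := by
  refine LinearMap.congr_fun (f := leftDeriv ∘ₗ LinearMap.mulLeft R (ι R i))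
    (g := Finsupp.lsingle i) ((basisFreeMonoid R X).ext fun w => ?_) a
  have cons : ι R i * basisFreeMonoid R X w = basisFreeMonoid R X (FreeMonoid.of i * w) := by
    simp [freeAlgebraBasisFreeMonoid_apply]
  rw [LinearMap.comp_apply, LinearMap.mulLeft_apply, cons, leftDeriv, Basis.constr_basis]
  rfl

@[simp]
theorem leftDeriv_ι (i : X) : leftDeriv (ι R i) = Finsupp.single i 1 := by
  simpa using leftDeriv_ι_mul i (1 : FreeAlgebra R X)

@[simp]
theorem algebraMapInv_ι (i : X) : algebraMapInv (ι R i) = 0 := by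
  simp [algebraMapInv]

theorem leftDeriv_mul (a c : FreeAlgebra R X) (i : X) :
    leftDeriv (a * c) i = leftDeriv a i * c + algebraMapInv a • leftDeriv c i := by
  classical
  induction a using left_induction with
  | algebraMap r => simp [← Algebra.smul_def]
  | ι_mul j a _ => by_cases h : j = i <;> simp [mul_assoc, h]
  | add a a' ha ha' =>
    simp only [add_mul, map_add, Finsupp.add_apply, ha, ha', add_smul]
    abel

theorem eq_algebraMap_add_sum_ι_mul (a : FreeAlgebra R X) :
    a = algebraMap R _ (algebraMapInv a) + (leftDeriv a).sum fun i c => ι R i * c := by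
  induction a using left_induction with
  | algebraMap r => simp
  | ι_mul i a _ => simp
  | add a a' ha ha' =>
    conv_lhs => rw [ha, ha']
    rw [map_add, map_add, map_add, Finsupp.sum_add_index' (by simp) (by simp [mul_add])]
    abel

end LeftDeriv

section Grading

variable {R X : Type*} [CommSemiring R]

/-- The homomorphism that multiplies the homogeneous component of degree `n` by `t ^ n`; the
coefficients of `grading a` are thus the homogeneous components of `a`. -/
noncomputable def grading : FreeAlgebra R X →ₐ[R] (FreeAlgebra R X)[X] :=
  lift R fun i => C (ι R i) * Polynomial.X

@[simp]
theorem grading_ι (i : X) : grading (ι R i) = C (ι R i) * Polynomial.X := by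
  simp [grading]

theorem eval_one_grading (a : FreeAlgebra R X) : (grading a).eval 1 = a := by
  induction a with
  | grade0 r => simp [Polynomial.algebraMap_apply]
  | grade1 i => simp
  | add a c ha hc => simp [ha, hc]
  | mul a c ha hc =>
    rw [map_mul, Polynomial.eval, eval₂_mul_noncomm _ _ fun _ => Commute.one_right _]
    exact congrArg₂ _ ha hc

theorem grading_injective :
    Function.Injective (grading : FreeAlgebra R X →ₐ[R] (FreeAlgebra R X)[X]) :=
  Function.LeftInverse.injective (g := eval 1) eval_one_grading

theorem coeff_grading_zero (a : FreeAlgebra R X) :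
    (grading a).coeff 0 = algebraMap R _ (algebraMapInv a) := by
  induction a using left_induction with
  | algebraMap r => simp [Polynomial.algebraMap_apply]
  | ι_mul i a _ => simp [mul_assoc]
  | add a c ha hc => simp [ha, hc]

theorem coeff_grading_ι_mul_succ (i : X) (a : FreeAlgebra R X) (n : ℕ) :
    (grading (ι R i * a)).coeff (n + 1) = ι R i * (grading a).coeff n := by
  rw [map_mul, grading_ι, mul_assoc, X_mul, coeff_C_mul, coeff_mul_X]

theorem leftDeriv_coeff_grading_succ (a : FreeAlgebra R X) (n : ℕ) (i : X) :
    leftDeriv ((grading a).coeff (n + 1)) i = (grading (leftDeriv a i)).coeff n := by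
  classical
  induction a using left_induction with
  | algebraMap r => simp [Polynomial.algebraMap_apply]
  | ι_mul j a _ =>
    rw [coeff_grading_ι_mul_succ]
    by_cases h : j = i <;> simp [h]
  | add a c ha hc => simp [ha, hc]

/-- `a` is a linear combination of words of length `n`. -/
def IsHomogeneous (n : ℕ) (a : FreeAlgebra R X) : Prop :=
  grading a = monomial n a

theorem isHomogeneous_coeff_grading (a : FreeAlgebra R X) (n : ℕ) :
    IsHomogeneous n ((grading a).coeff n) := by
  rw [IsHomogeneous]
  induction a using left_induction generalizing n with
  | algebraMap r => cases n <;> simp [Polynomial.algebraMap_apply, coeff_C]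
  | ι_mul i a ih =>
    cases n with
    | zero => simp [coeff_grading_zero]
    | succ n =>
      rw [coeff_grading_ι_mul_succ, map_mul, ih, grading_ι, mul_assoc, X_mul_monomial,
        C_mul_monomial]
  | add a c ha hc => simp [ha, hc]

namespace IsHomogeneous

variable {n : ℕ} {a : FreeAlgebra R X}

theorem coeff_grading (h : IsHomogeneous n a) (m : ℕ) :
    (grading a).coeff m = if n = m then a else 0 := by
  rw [h, coeff_monomial]

theorem eq_degree {m : ℕ} (hn : IsHomogeneous n a) (hm : IsHomogeneous m a) (ha : a ≠ 0) :
    n = m := by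
  by_contra hnm
  have hcoeff := hm.coeff_grading m
  rw [if_pos rfl, hn.coeff_grading, if_neg hnm] at hcoeff
  exact ha hcoeff.symm

theorem eq_algebraMap (h : IsHomogeneous 0 a) : a = algebraMap R _ (algebraMapInv a) := by
  rw [← coeff_grading_zero, h.coeff_grading, if_pos rfl]

theorem algebraMapInv_eq_zero (h : IsHomogeneous (n + 1) a) : algebraMapInv a = 0 := by
  refine (algebraMap_leftInverse (R := R) (X := X)).injective ?_
  rw [← coeff_grading_zero, h.coeff_grading, if_neg n.succ_ne_zero, map_zero]

theorem leftDeriv_apply (h : IsHomogeneous (n + 1) a) (i : X) :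
    IsHomogeneous n (leftDeriv a i) := by
  ext m : 1
  rw [← leftDeriv_coeff_grading_succ, h.coeff_grading, coeff_monomial]
  split_ifs <;> simp_all

theorem eq_sum_ι_mul (h : IsHomogeneous (n + 1) a) :
    a = (leftDeriv a).sum fun i c => ι R i * c := by
  simpa [h.algebraMapInv_eq_zero] using eq_algebraMap_add_sum_ι_mul a

theorem mem_span_range_ι (h : IsHomogeneous 1 a) : a ∈ Submodule.span R (Set.range (ι R)) := by
  rw [h.eq_sum_ι_mul]
  refine Submodule.sum_mem _ fun i _ => ?_
  dsimp only
  rw [(h.leftDeriv_apply i).eq_algebraMap, ← Algebra.commutes, ← Algebra.smul_def]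
  exact Submodule.smul_mem _ _ (Submodule.subset_span ⟨i, rfl⟩)

end IsHomogeneous

end Grading

section Degree

variable {R X : Type*} [CommSemiring R]

/-- The total degree of a noncommutative polynomial, with the value `0` at `0`. -/
noncomputable def degree (a : FreeAlgebra R X) : ℕ :=
  (grading a).natDegree

/-- The homogeneous component of the highest degree. -/
noncomputable def leadingForm (a : FreeAlgebra R X) : FreeAlgebra R X :=
  (grading a).leadingCoeff

variable {a c : FreeAlgebra R X}

@[simp]
theorem degree_zero : degree (0 : FreeAlgebra R X) = 0 := by
  simp [degree]

theorem isHomogeneous_leadingForm (a : FreeAlgebra R X) :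
    IsHomogeneous (degree a) (leadingForm a) :=
  isHomogeneous_coeff_grading a _

theorem grading_ne_zero (ha : a ≠ 0) : grading a ≠ 0 :=
  (map_ne_zero_iff _ grading_injective).mpr ha

theorem leadingForm_ne_zero (ha : a ≠ 0) : leadingForm a ≠ 0 :=
  leadingCoeff_ne_zero.mpr (grading_ne_zero ha)

theorem degree_ι_le (i : X) : degree (ι R i) ≤ 1 := by
  rw [degree, grading_ι]
  exact (natDegree_C_mul_le _ _).trans natDegree_X_le

theorem degree_eq_of_degree_add_lt (h : degree (a + c) < degree c) : degree a = degree c := by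
  rw [degree, map_add] at h
  rcases lt_trichotomy (grading a).natDegree (grading c).natDegree with hlt | heq | hgt
  · exact absurd (natDegree_add_eq_right_of_natDegree_lt hlt) h.ne
  · exact heq
  · exact absurd h ((natDegree_add_eq_left_of_natDegree_lt hgt).trans_gt hgt).not_gt

theorem leadingForm_add_leadingForm_eq_zero (h : degree (a + c) < degree c) :
    leadingForm a + leadingForm c = 0 := by
  have := coeff_eq_zero_of_natDegree_lt h
  rw [map_add, coeff_add] at this
  rw [leadingForm, leadingCoeff, show (grading a).natDegree = _ from degree_eq_of_degree_add_lt h]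
  exact this

theorem isHomogeneous_one_of_degree_le_one (ha : degree a ≤ 1) (ha0 : algebraMapInv a = 0) :
    IsHomogeneous 1 a := by
  have heval := eval_one_grading a
  rw [eval_eq_sum_range' (Nat.lt_succ_of_le ha), Finset.sum_range_succ, Finset.sum_range_one,
    coeff_grading_zero, ha0, map_zero, zero_mul, zero_add, one_pow, mul_one] at heval
  rw [← heval]
  exact isHomogeneous_coeff_grading a 1

section NoZeroDivisors

variable [NoZeroDivisors R]

theorem degree_mul (ha : a ≠ 0) (hc : c ≠ 0) : degree (a * c) = degree a + degree c := by
  rw [degree, map_mul, natDegree_mul (grading_ne_zero ha) (grading_ne_zero hc), degree, degree]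

theorem leadingForm_mul (a c : FreeAlgebra R X) :
    leadingForm (a * c) = leadingForm a * leadingForm c := by
  rw [leadingForm, map_mul, leadingCoeff_mul, leadingForm, leadingForm]

theorem leadingForm_smul (r : R) (a : FreeAlgebra R X) :
    leadingForm (r • a) = r • leadingForm a := by
  rw [Algebra.smul_def, leadingForm_mul, Algebra.smul_def]
  simp [leadingForm, Polynomial.algebraMap_apply]

end NoZeroDivisors

end Degree

theorem degree_sub_lt {R X : Type*} [CommRing R] {u v : FreeAlgebra R X} (hv : degree v ≠ 0)
    (h : leadingForm v = leadingForm u) :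
    degree (v - u) < degree v := by
  have hv0 : v ≠ 0 := fun h0 => hv (by rw [h0, degree_zero])
  have hdeg : degree v = degree u :=
    (isHomogeneous_leadingForm v).eq_degree (h ▸ isHomogeneous_leadingForm u)
      (leadingForm_ne_zero hv0)
  have hu0 : u ≠ 0 := fun h0 => hv (by rw [hdeg, h0, degree_zero])
  rcases eq_or_ne v u with rfl | huv
  · simpa [degree, Nat.pos_iff_ne_zero] using hv
  refine natDegree_lt_natDegree (grading_ne_zero (sub_ne_zero.mpr huv)) ?_
  rw [map_sub]
  refine degree_sub_lt_left ?_ (grading_ne_zero hv0) h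
  rw [degree_eq_natDegree (grading_ne_zero hv0), degree_eq_natDegree (grading_ne_zero hu0)]
  exact congrArg Nat.cast hdeg

section Field

variable {K X : Type*} [Field K]

theorem IsHomogeneous.exists_eq_mul {j k : ℕ} (hkj : k ≤ j) {p q u v : FreeAlgebra K X}
    (hp : IsHomogeneous j p) (hq : IsHomogeneous k q) (hq0 : q ≠ 0) (h : p * u + q * v = 0) :
    ∃ r, v = r * u := by
  induction k generalizing j p q with
  | zero =>
    have hq0' : algebraMapInv q ≠ 0 := fun h0 => hq0 (by rw [hq.eq_algebraMap, h0, map_zero])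
    refine ⟨(algebraMapInv q)⁻¹ • -p, ?_⟩
    rw [hq.eq_algebraMap, ← Algebra.smul_def, add_eq_zero_iff_neg_eq, ← neg_mul] at h
    rw [smul_mul_assoc, h, inv_smul_smul₀ hq0']
  | succ k ih =>
    obtain ⟨j, rfl⟩ := Nat.exists_eq_add_of_le' hkj
    have hq_deriv : leftDeriv q ≠ 0 := fun h0 => hq0 (by rw [hq.eq_sum_ι_mul, h0]; simp)
    obtain ⟨i, hi⟩ := DFunLike.ne_iff.mp hq_deriv
    refine ih (j := j + k) (by omega) (hp.leftDeriv_apply i) (hq.leftDeriv_apply i) hi ?_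
    simpa [leftDeriv_mul, hp.algebraMapInv_eq_zero, hq.algebraMapInv_eq_zero] using
      DFunLike.congr_fun (congrArg leftDeriv h) i

/-- Cohn's weak algorithm for two elements. -/
theorem exists_leadingForm_eq_mul {p q u v : FreeAlgebra K X} (huv : degree u ≤ degree v)
    (h : degree (p * u + q * v) < degree (q * v)) : ∃ r, leadingForm v = r * leadingForm u := by
  have hqv : q * v ≠ 0 := fun h0 => by simp [h0] at h
  have hlead := leadingForm_add_leadingForm_eq_zero h
  have hpu : p * u ≠ 0 := fun h0 => leadingForm_ne_zero hqv (by simpa [h0, leadingForm] using hlead)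
  have hdeg := degree_eq_of_degree_add_lt h
  rw [degree_mul (left_ne_zero_of_mul hpu) (right_ne_zero_of_mul hpu),
    degree_mul (left_ne_zero_of_mul hqv) (right_ne_zero_of_mul hqv)] at hdeg
  rw [leadingForm_mul, leadingForm_mul] at hlead
  exact IsHomogeneous.exists_eq_mul (by omega) (isHomogeneous_leadingForm p)
    (isHomogeneous_leadingForm q) (leadingForm_ne_zero (left_ne_zero_of_mul hqv)) hlead

end Field

end WeakAlgorithm

namespace FreeLie

open FreeLieAlgebra WeakAlgorithm LieSubalgebra

attribute [local instance] LieRing.ofAssociativeRing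

section CommRing

variable {R X : Type*} [CommRing R]

variable (R X) in
/-- The canonical map from the free Lie algebra to the free associative algebra. -/
noncomputable def toFreeAlgebra : FreeLieAlgebra R X →ₗ⁅R⁆ FreeAlgebra R X :=
  lift R (FreeAlgebra.ι R)

@[simp]
theorem toFreeAlgebra_of (i : X) : toFreeAlgebra R X (of R i) = FreeAlgebra.ι R i :=
  lift_of_apply _ _

theorem universalEnvelopingEquivFreeAlgebra_ι (x : FreeLieAlgebra R X) :
    universalEnvelopingEquivFreeAlgebra R X (UniversalEnvelopingAlgebra.ι R x) =
      toFreeAlgebra R X x :=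
  UniversalEnvelopingAlgebra.lift_ι_apply R _ x

theorem lieSpan_range_of : lieSpan R (FreeLieAlgebra R X) (Set.range (of R)) = ⊤ := by
  rw [eq_top_iff]
  intro x _
  let S := lieSpan R (FreeLieAlgebra R X) (Set.range (of R))
  have hof (i : X) : of R i ∈ S := subset_lieSpan ⟨i, rfl⟩
  have hid : S.incl.comp (lift R fun i => (⟨of R i, hof i⟩ : S)) = LieHom.id :=
    hom_ext fun i => by simp
  rw [← LieHom.id_apply (R := R) x, ← hid]
  exact (lift R (fun i => (⟨of R i, hof i⟩ : S)) x).2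

theorem algebraMapInv_toFreeAlgebra (x : FreeLieAlgebra R X) :
    FreeAlgebra.algebraMapInv (toFreeAlgebra R X x) = 0 := by
  have : (FreeAlgebra.algebraMapInv : FreeAlgebra R X →ₐ[R] R).toLieHom.comp
      (toFreeAlgebra R X) = 0 := hom_ext fun i => by simp
  exact LieHom.congr_fun this x

/-- The polynomials all of whose coefficients lie in a Lie subalgebra. -/
def polynomialsOver {A : Type*} [Ring A] [Algebra R A] (S : LieSubalgebra R A) :
    LieSubalgebra R (Polynomial A) where
  carrier := {f | ∀ n, f.coeff n ∈ S}
  zero_mem' _ := by simp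
  add_mem' hf hg n := by simpa using add_mem (hf n) (hg n)
  smul_mem' r f hf n := by simpa using S.smul_mem r (hf n)
  lie_mem' {f g} hf hg n := by
    rw [LieRing.of_associative_ring_bracket, Polynomial.coeff_sub, Polynomial.coeff_mul,
      Polynomial.coeff_mul, ← Finset.Nat.sum_antidiagonal_swap, ← Finset.sum_sub_distrib]
    exact sum_mem fun p _ => S.lie_mem (hf _) (hg _)

theorem coeff_grading_mem_range (x : FreeLieAlgebra R X) (n : ℕ) :
    (grading (toFreeAlgebra R X x)).coeff n ∈ (toFreeAlgebra R X).range := by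
  have hle : lieSpan R (FreeLieAlgebra R X) (Set.range (of R)) ≤
      (polynomialsOver (toFreeAlgebra R X).range).comap
        (grading.toLieHom.comp (toFreeAlgebra R X)) := by
    rw [lieSpan_le]
    rintro _ ⟨i, rfl⟩ n
    change (grading (toFreeAlgebra R X (of R i))).coeff n ∈ _
    rw [toFreeAlgebra_of, grading_ι, Polynomial.coeff_C_mul, Polynomial.coeff_X]
    split_ifs
    · exact ⟨of R i, by simp⟩
    · simp
  exact hle (by rw [lieSpan_range_of]; exact mem_top x) n

theorem map_mem_idealSpan_of_mem_lieSpan {L A : Type*} [LieRing L] [LieAlgebra R L] [Ring A]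
    [Algebra R A] (φ : L →ₗ⁅R⁆ A) {s : Set L} {x : L} (hx : x ∈ lieSpan R L s) :
    φ x ∈ Ideal.span (φ '' s) := by
  let J : LieSubalgebra R A :=
    { (Ideal.span (φ '' s)).restrictScalars R with
      lie_mem' := fun {a c} ha hc =>
        sub_mem (Ideal.mul_mem_left _ a hc) (Ideal.mul_mem_left _ c ha) }
  have hle : lieSpan R L s ≤ J.comap φ :=
    lieSpan_le.mpr fun y hy => Ideal.subset_span (Set.mem_image_of_mem φ hy)
  exact hle hx

theorem exists_toFreeAlgebra_eq_of_lieSpan_pair_eq_top {u v : FreeLieAlgebra R X}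
    (h : lieSpan R (FreeLieAlgebra R X) {u, v} = ⊤) (x : FreeLieAlgebra R X) :
    ∃ p q, p * toFreeAlgebra R X u + q * toFreeAlgebra R X v = toFreeAlgebra R X x := by
  have hx := map_mem_idealSpan_of_mem_lieSpan (toFreeAlgebra R X) (h ▸ mem_top x)
  rwa [Set.image_pair, Ideal.mem_span_pair] at hx

theorem lieSpan_pair_le_lieSpan_pair_sub_smul {L : Type*} [LieRing L] [LieAlgebra R L]
    (u v : L) (r : R) : lieSpan R L {u, v} ≤ lieSpan R L {u, v - r • u} := by
  have hu : u ∈ lieSpan R L {u, v - r • u} := subset_lieSpan (Set.mem_insert _ _)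
  have hv : v - r • u ∈ lieSpan R L {u, v - r • u} := subset_lieSpan (Set.mem_insert_of_mem _ rfl)
  rw [lieSpan_le, Set.pair_subset_iff]
  exact ⟨hu, by simpa using add_mem hv (LieSubalgebra.smul_mem _ r hu)⟩

end CommRing

section Field

variable {K X : Type*} [Field K]

local notation "κ" => toFreeAlgebra K X

theorem toFreeAlgebra_injective : Function.Injective κ := fun x y h => by
  rw [← universalEnvelopingEquivFreeAlgebra_ι, ← universalEnvelopingEquivFreeAlgebra_ι] at h
  exact PBW.ι_injective (AlgEquiv.injective _ h)

theorem exists_smul_eq_of_toFreeAlgebra_eq_mul {x u : FreeLieAlgebra K X} {q : FreeAlgebra K X}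
    (h : κ x = q * κ u) : ∃ c : K, x = c • u := by
  refine PBW.exists_smul_eq_of_ι_eq_mul_ι
    (q := (universalEnvelopingEquivFreeAlgebra K X).symm q)
    ((universalEnvelopingEquivFreeAlgebra K X).injective ?_)
  rw [map_mul, AlgEquiv.apply_symm_apply, universalEnvelopingEquivFreeAlgebra_ι,
    universalEnvelopingEquivFreeAlgebra_ι, h]

theorem mem_span_range_of_of_degree_le_one {u : FreeLieAlgebra K X} (h : degree (κ u) ≤ 1) :
    u ∈ Submodule.span K (Set.range (of K)) := by
  have hu := (isHomogeneous_one_of_degree_le_one h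
    (algebraMapInv_toFreeAlgebra u)).mem_span_range_ι
  have hrange : Set.range (FreeAlgebra.ι K) = (κ).toLinearMap '' Set.range (of K) := by
    rw [← Set.range_comp]
    exact congrArg Set.range (funext fun i => (toFreeAlgebra_of i).symm)
  rw [hrange, Submodule.span_image] at hu
  obtain ⟨w, hw, hwu⟩ := hu
  exact toFreeAlgebra_injective hwu ▸ hw

theorem exists_forall_toFreeAlgebra_of_ne_mul [Nontrivial X] (u : FreeLieAlgebra K X) :
    ∃ i, ∀ p, κ (of K i) ≠ p * κ u := by
  by_contra! h
  obtain ⟨i, j, hij⟩ := exists_pair_ne X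
  obtain ⟨p, hp⟩ := h i
  obtain ⟨q, hq⟩ := h j
  obtain ⟨c, hc⟩ := exists_smul_eq_of_toFreeAlgebra_eq_mul hp
  obtain ⟨d, hd⟩ := exists_smul_eq_of_toFreeAlgebra_eq_mul hq
  have hci : Finsupp.single i 1 = c • leftDeriv (κ u) := by
    simpa using congrArg (fun y => leftDeriv (κ y)) hc
  have hdj : Finsupp.single j 1 = d • leftDeriv (κ u) := by
    simpa using congrArg (fun y => leftDeriv (κ y)) hd
  have hc0 : c ≠ 0 := by
    rintro rfl
    simpa using DFunLike.congr_fun hci i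
  have huj : leftDeriv (κ u) j = 0 := by
    simpa [hij, hc0] using (DFunLike.congr_fun hci j).symm
  simpa [huj] using DFunLike.congr_fun hdj j

theorem exists_degree_sub_smul_lt [Nontrivial X] {u v : FreeLieAlgebra K X}
    (h : lieSpan K (FreeLieAlgebra K X) {u, v} = ⊤) (huv : degree (κ u) ≤ degree (κ v))
    (hv : 1 < degree (κ v)) : ∃ c : K, degree (κ (v - c • u)) < degree (κ v) := by
  obtain ⟨i, hi⟩ := exists_forall_toFreeAlgebra_of_ne_mul u
  obtain ⟨p, q, hpq⟩ := exists_toFreeAlgebra_eq_of_lieSpan_pair_eq_top h (of K i)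
  have hq0 : q ≠ 0 := fun h0 => hi p (by rw [← hpq, h0, zero_mul, add_zero])
  have hv0 : κ v ≠ 0 := fun h0 => by simp [h0] at hv
  have hlt : degree (p * κ u + q * κ v) < degree (q * κ v) := by
    rw [hpq, toFreeAlgebra_of, degree_mul hq0 hv0]
    have := degree_ι_le (R := K) i
    omega
  obtain ⟨r, hr⟩ := exists_leadingForm_eq_mul huv hlt
  obtain ⟨u', hu'⟩ : leadingForm (κ u) ∈ (κ).range := coeff_grading_mem_range u _
  obtain ⟨v', hv'⟩ : leadingForm (κ v) ∈ (κ).range := coeff_grading_mem_range v _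
  rw [← hu', ← hv'] at hr
  obtain ⟨c, rfl⟩ := exists_smul_eq_of_toFreeAlgebra_eq_mul hr
  refine ⟨c, ?_⟩
  rw [map_sub]
  exact degree_sub_lt hv.ne_bot (by rw [map_smul, leadingForm_smul, ← hu', ← hv', map_smul])

theorem mem_span_range_of_of_lieSpan_pair_eq_top [Nontrivial X] {u v : FreeLieAlgebra K X}
    (h : lieSpan K (FreeLieAlgebra K X) {u, v} = ⊤) :
    u ∈ Submodule.span K (Set.range (of K)) ∧ v ∈ Submodule.span K (Set.range (of K)) := by
  induction hN : degree (κ u) + degree (κ v) using Nat.strong_induction_on generalizing u v with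
  | _ N ih =>
    wlog huv : degree (κ u) ≤ degree (κ v) generalizing u v
    · exact (this (Set.pair_comm u v ▸ h) (by omega) (by omega)).symm
    rcases le_or_gt (degree (κ v)) 1 with hv | hv
    · exact ⟨mem_span_range_of_of_degree_le_one (huv.trans hv),
        mem_span_range_of_of_degree_le_one hv⟩
    obtain ⟨c, hc⟩ := exists_degree_sub_smul_lt h huv hv
    obtain ⟨hu, hvu⟩ := ih _ (by omega) (u := u) (v := v - c • u)
      (top_le_iff.mp (h.ge.trans (lieSpan_pair_le_lieSpan_pair_sub_smul u v c))) rfl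
    exact ⟨hu, by simpa using add_mem hvu (Submodule.smul_mem _ c hu)⟩

end Field

end FreeLie

theorem stmt_19_general (K : Type*) [Field K] :
    (∀ x : FreeLieAlgebra K (Fin 2),
      (LieSubalgebra.lieSpan K (FreeLieAlgebra K (Fin 2)) {x} : Set (FreeLieAlgebra K (Fin 2)))
        = (Submodule.span K {x} : Set (FreeLieAlgebra K (Fin 2)))) ∧
    (∀ f : FreeLieAlgebra K (Fin 2) →ₗ⁅K⁆ FreeLieAlgebra K (Fin 2), Function.Surjective f →
      ∀ i : Fin 2, f (FreeLieAlgebra.of K i) ∈ Submodule.span K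
        {FreeLieAlgebra.of K (0 : Fin 2), FreeLieAlgebra.of K (1 : Fin 2)}) := by
  have range_of : Set.range (FreeLieAlgebra.of K) =
      {FreeLieAlgebra.of K (0 : Fin 2), FreeLieAlgebra.of K (1 : Fin 2)} := by
    ext; simp [Fin.exists_fin_two, eq_comm]
  refine ⟨fun x => ?_, fun f hf => ?_⟩
  · have hx := LieSubalgebra.coe_lieSpan_eq_span_of_forall_lie_eq_zero (R := K) (s := {x})
      (by simp)
    exact congrArg SetLike.coe hx
  have generate : LieSubalgebra.lieSpan K (FreeLieAlgebra K (Fin 2))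
      {f (FreeLieAlgebra.of K 0), f (FreeLieAlgebra.of K 1)} = ⊤ := by
    rw [← Set.image_pair, ← range_of, ← LieSubalgebra.map_lieSpan, FreeLie.lieSpan_range_of,
      ← LieHom.range_eq_map, LieHom.range_eq_top]
    exact hf
  rw [← range_of]
  exact Fin.forall_fin_two.mpr (FreeLie.mem_span_range_of_of_lieSpan_pair_eq_top generate)

/-- In the free Lie algebra on two generators over a field `K`, the subalgebra generated
by a single degree-one element `x` reduces to its scalar multiples (so all homogeneous
components of degree `≥ 2` of elements of this subalgebra vanish); consequently every
automorphism of the free Lie algebra of rank `2` is linear: it maps the generators into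
the linear span of the generators. -/
theorem stmt_19 (K : Type*) [Field K] :
    (∀ x ∈ Submodule.span K
        {FreeLieAlgebra.of K (0 : Fin 2), FreeLieAlgebra.of K (1 : Fin 2)},
      (LieSubalgebra.lieSpan K (FreeLieAlgebra K (Fin 2)) {x} : Set (FreeLieAlgebra K (Fin 2)))
        = (Submodule.span K {x} : Set (FreeLieAlgebra K (Fin 2)))) ∧
    (∀ e : FreeLieAlgebra K (Fin 2) ≃ₗ⁅K⁆ FreeLieAlgebra K (Fin 2), ∀ i : Fin 2,
      e (FreeLieAlgebra.of K i) ∈ Submodule.span K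
        {FreeLieAlgebra.of K (0 : Fin 2), FreeLieAlgebra.of K (1 : Fin 2)}) :=
  ⟨fun x _ => (stmt_19_general K).1 x, fun e => (stmt_19_general K).2 e e.surjective⟩
end
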